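/- (Strong duality for the restricted second pair of programs.) Under Assumption (A), for every ε ∈ (0,t0) there exist a (P_{2,ε})-admissible measure μ_{2,ε} and a (D_{2,ε})-admissible measure λ_{2,ε} such that ∫ g dμ_{2,ε} = inf{∫ g dμ : μ (P_{2,ε})-admissible} = sup{λ(Ω_ε) : λ (D_{2,ε})-admissible} = λ_{2,ε}(Ω_ε), and the complementary slackness conditions hold: r_{μ_{2,ε}}(t, b(t)) = 1 for λ_{2,ε}-almost every t ∈ Ω_ε, and ∫_{Ω_ε} r_θ(t,b(t)) λ_{2,ε}(dt) = g(θ) for μ_{2,ε}-almost every θ ∈ [2b(0),∞). -/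

import Mathlib

open MeasureTheory Set Filter
open scoped ENNReal NNReal Topology

noncomputable def rTheta (θ t x : ℝ) : ℝ := Real.exp (-θ ^ 2 / (2 * t) + θ * x / t)

noncomputable def rMu (μ : Measure ℝ) (t x : ℝ) : ℝ≥0∞ :=
  ∫⁻ θ, ENNReal.ofReal (rTheta θ t x) ∂μ

/-- `(P_{2,ε})`-admissibility: a finite nonnegative Borel measure on `[2b(0),∞)`
with `r_μ(t, b(t)) ≥ 1` for all `t ∈ Ω_ε = [ε, t0]`. -/
def P2epsAdm (b : ℝ → ℝ) (t0 ε : ℝ) (μ : Measure ℝ) : Prop :=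
  IsFiniteMeasure μ ∧ μ (Set.Ici (2 * b 0))ᶜ = 0 ∧
    ∀ t ∈ Set.Icc ε t0, 1 ≤ rMu μ t (b t)

/-- `(D_{2,ε})`-admissibility: a finite nonnegative Borel measure on `Ω_ε = [ε, t0]`
with `∫ r_θ(t, b(t)) λ(dt) ≤ g(θ) = r_θ(t0, x0)` for all `θ ∈ [2b(0),∞)`. -/
def D2epsAdm (b : ℝ → ℝ) (t0 x0 ε : ℝ) (lam : Measure ℝ) : Prop :=
  IsFiniteMeasure lam ∧ lam (Set.Icc ε t0)ᶜ = 0 ∧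
    ∀ θ ∈ Set.Ici (2 * b 0),
      (∫⁻ t, ENNReal.ofReal (rTheta θ t (b t)) ∂lam) ≤ ENNReal.ofReal (rTheta θ t0 x0)

/-!
Write `a = 2 b(0)` and divide `r_θ(t, b(t))` by `g(θ)`, which leaves the kernel
`k(θ, t) = exp (-(θ² / 2) S(t) + θ C(t))` with `S(t) = 1/t - 1/t0` and `C(t) = b(t)/t - x0/t0`. For
`t < t0` it vanishes as `θ → ∞`, so von Neumann's minimax theorem for matrix games extends to `k`
by compactness and produces finite measures `ν` on `[a, ∞)` and `λ` on `[ε, t0]` with `∫ k dλ ≤ 1`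
on `[a, ∞)`, `∫ k dν ≥ 1` on `[ε, t0)` and `ν` of mass at most that of `λ`. Since `k(θ, t0) → ∞` as
`θ → ∞`, `λ` does not charge `t0`, and complementary slackness gives `∫ k dν = 1` for `λ`-almost
every `t` and `∫ k dλ = 1` for `ν`-almost every `θ`. The candidates are `μ = g⁻¹ ν` and `λ`; the
constraint at `t0` and the finiteness of `μ` both follow once `ν` has bounded support.

If `λ` does not charge some interval `(t₁, t0)`, then `∫ k dλ → 0` as `θ → ∞`, which bounds the
support of `ν`. Otherwise `∫ k dν = 1` holds at times accumulating at `t0`. As a function of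
`s = 1/t - 1/t0` the integral is holomorphic on a disc tangent to the imaginary axis at `s = 0`,
with moment bounds at `0` that make it quasi-analytic there, so it equals `1` at all times in
`(0, t0)`. On the other side `θ ↦ ∫ k dλ` is real-analytic and tends to `0` as `θ → -∞`, so it
differs from `1` just to the right of `a`, and `ν` has a gap there. As `t → 0` the atom of `μ` at
`a` contributes an analytic function of `t` to `r_μ(t, b(t)) = 1`, whereas the part beyond the gap
is exponentially flat, hence null: `ν` is supported at `a`.
-/

/-! ### Minimax duality for kernels -/

section Minimax

theorem exists_saddle_stdSimplex {I J : Type*} [Fintype I] [Fintype J] [Nonempty I] [Nonempty J]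
    (A : Matrix I J ℝ) :
    ∃ p ∈ stdSimplex ℝ I, ∃ q ∈ stdSimplex ℝ J, ∀ i j, A.row i ⬝ᵥ q ≤ p ⬝ᵥ A.col j := by
  classical
  let B : (I → ℝ) →ₗ[ℝ] (J → ℝ) →ₗ[ℝ] ℝ := Matrix.toLinearMap₂' ℝ A
  have cont_left (q : J → ℝ) : Continuous fun p => B p q :=
    (LinearMap.flip B q).continuous_of_finiteDimensional
  have cont_right (p : I → ℝ) : Continuous (B p) := (B p).continuous_of_finiteDimensional
  obtain ⟨q, hq, p, hp, hsaddle⟩ := Sion.exists_isSaddlePointOn (f := fun q p => B p q)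
    (X := stdSimplex ℝ J) (Y := stdSimplex ℝ I)
    ⟨_, single_mem_stdSimplex ℝ (Classical.arbitrary J)⟩ (convex_stdSimplex ℝ J)
    (isCompact_stdSimplex ℝ J)
    (fun p _ => (cont_right p).lowerSemicontinuous.lowerSemicontinuousOn _)
    (fun p _ => ((B p).convexOn (convex_stdSimplex ℝ J)).quasiconvexOn)
    (convex_stdSimplex ℝ I) ⟨_, single_mem_stdSimplex ℝ (Classical.arbitrary I)⟩
    (isCompact_stdSimplex ℝ I)
    (fun q _ => (cont_left q).upperSemicontinuous.upperSemicontinuousOn _)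
    (fun q _ => ((LinearMap.flip B q).concaveOn (convex_stdSimplex ℝ I)).quasiconcaveOn)
  refine ⟨p, hp, q, hq, fun i j => ?_⟩
  simpa [B, Matrix.toLinearMap₂'_apply', Matrix.dotProduct_mulVec] using
    hsaddle _ (single_mem_stdSimplex ℝ j) _ (single_mem_stdSimplex ℝ i)

variable {Y T : Type*} [TopologicalSpace Y] [MeasurableSpace Y] [BorelSpace Y]
  [TopologicalSpace T] [MeasurableSpace T] [BorelSpace T]

theorem exists_probabilityMeasure_integral_eq_sum {I : Type*} [Fintype I] {p : I → ℝ}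
    (hp : p ∈ stdSimplex ℝ I) (y : I → Y) :
    ∃ ρ : ProbabilityMeasure Y, ∀ f : Y → ℝ, Continuous f →
      ∫ y, f y ∂(ρ : Measure Y) = ∑ i, p i * f (y i) := by
  refine ⟨⟨∑ i, ENNReal.ofReal (p i) • Measure.dirac (y i), ⟨?_⟩⟩, fun f hf => ?_⟩
  · simp [← ENNReal.ofReal_sum_of_nonneg fun i _ => hp.1 i, hp.2]
  · rw [ProbabilityMeasure.coe_mk, integral_finsetSum_measure]
    · simp [integral_dirac' _ _ hf.stronglyMeasurable, ENNReal.toReal_ofReal (hp.1 _)]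
    · exact fun i _ => (integrable_dirac' hf.stronglyMeasurable (by simp)).smul_measure (by simp)

theorem exists_saddle_probabilityMeasure_of_finite (κ : Y → T → ℝ) {I : Finset Y} {J : Finset T}
    (hI : I.Nonempty) (hJ : J.Nonempty) (hκI : ∀ y ∈ I, Continuous (κ y))
    (hκJ : ∀ t ∈ J, Continuous fun y => κ y t) :
    ∃ (ρ : ProbabilityMeasure Y) (π : ProbabilityMeasure T), ∀ y ∈ I, ∀ t ∈ J,
      ∫ t, κ y t ∂(π : Measure T) ≤ ∫ y, κ y t ∂(ρ : Measure Y) := by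
  have := hI.to_subtype
  have := hJ.to_subtype
  obtain ⟨p, hp, q, hq, hpq⟩ := exists_saddle_stdSimplex (.of fun (y : I) (t : J) => κ y t)
  obtain ⟨ρ, hρ⟩ := exists_probabilityMeasure_integral_eq_sum hp ((↑) : I → Y)
  obtain ⟨π, hπ⟩ := exists_probabilityMeasure_integral_eq_sum hq ((↑) : J → T)
  refine ⟨ρ, π, fun y hy t ht => ?_⟩
  rw [hρ _ (hκJ t ht), hπ _ (hκI y hy)]
  simpa [dotProduct, mul_comm] using hpq ⟨y, hy⟩ ⟨t, ht⟩

/- Each single inequality defines a closed subset of the compact space of pairs `(ρ, π)`, and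
finitely many of them have a common solution by von Neumann's theorem for matrix games. -/
theorem exists_saddle_probabilityMeasure [CompactSpace Y] [T2Space Y] [CompactSpace T] [T2Space T]
    (κ : Y → T → ℝ) {Y' : Set Y} {T' : Set T} (hY' : Y'.Nonempty) (hT' : T'.Nonempty)
    (hκY : ∀ y ∈ Y', Continuous (κ y)) (hκT : ∀ t ∈ T', Continuous fun y => κ y t) :
    ∃ (ρ : ProbabilityMeasure Y) (π : ProbabilityMeasure T), ∀ y ∈ Y', ∀ t ∈ T',
      ∫ t, κ y t ∂(π : Measure T) ≤ ∫ y, κ y t ∂(ρ : Measure Y) := by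
  classical
  obtain ⟨y₀, hy₀⟩ := hY'
  obtain ⟨t₀, ht₀⟩ := hT'
  let C (q : Y' × T') : Set (ProbabilityMeasure Y × ProbabilityMeasure T) :=
    {m | ∫ t, κ q.1 t ∂(m.2 : Measure T) ≤ ∫ y, κ y q.2 ∂(m.1 : Measure Y)}
  have closed (q : Y' × T') : IsClosed (C q) := by
    refine isClosed_le ?_ ?_
    · exact (ProbabilityMeasure.continuous_integral_continuousMap
        (⟨_, hκY q.1 q.1.2⟩ : C(T, ℝ))).comp continuous_snd
    · exact (ProbabilityMeasure.continuous_integral_continuousMap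
        (⟨_, hκT q.2 q.2.2⟩ : C(Y, ℝ))).comp continuous_fst
  have finite_inter (s : Finset (Y' × T')) : (⋂ q ∈ s, C q).Nonempty := by
    obtain ⟨ρ, π, h⟩ := exists_saddle_probabilityMeasure_of_finite κ
      (I := insert y₀ (s.image fun q => (q.1 : Y))) (J := insert t₀ (s.image fun q => (q.2 : T)))
      (Finset.insert_nonempty _ _) (Finset.insert_nonempty _ _)
      (fun y hy => hκY y (by aesop)) (fun t ht => hκT t (by aesop))
    refine ⟨(ρ, π), mem_iInter₂.2 fun q hq => h _ ?_ _ ?_⟩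
    · exact Finset.mem_insert_of_mem (Finset.mem_image_of_mem _ hq)
    · exact Finset.mem_insert_of_mem (Finset.mem_image_of_mem _ hq)
  obtain ⟨⟨ρ, π⟩, h⟩ := CompactSpace.iInter_nonempty closed finite_inter
  exact ⟨ρ, π, fun y hy t ht => mem_iInter.1 h (⟨y, hy⟩, ⟨t, ht⟩)⟩

theorem lintegral_comap_coe_onePoint {Θ : Type*} [TopologicalSpace Θ] [MeasurableSpace Θ]
    [BorelSpace Θ] [MeasurableSpace (OnePoint Θ)] [BorelSpace (OnePoint Θ)]
    (ρ : Measure (OnePoint Θ)) {f : OnePoint Θ → ℝ≥0∞} (hf : f OnePoint.infty = 0) :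
    ∫⁻ θ, f (θ : Θ) ∂(ρ.comap (↑)) = ∫⁻ y, f y ∂ρ := by
  have emb := (OnePoint.isOpenEmbedding_coe (X := Θ)).measurableEmbedding
  have support_subset : Function.support f ⊆ range ((↑) : Θ → OnePoint Θ) := by
    intro y hy
    induction y using OnePoint.rec with
    | infty => exact absurd hf hy
    | coe θ => exact mem_range_self θ
  rw [← emb.lintegral_map, emb.map_comap, ← lintegral_indicator emb.measurableSet_range,
    indicator_eq_self.2 support_subset]

variable {Θ : Type*} [TopologicalSpace Θ] [LocallyCompactSpace Θ] [T2Space Θ] [MeasurableSpace Θ]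
  [BorelSpace Θ] [Nonempty Θ] [CompactSpace T] [T2Space T] {k : Θ → T → ℝ} {T' : Set T}

/- The saddle point inequality is applied on the one-point compactification of `Θ`, where `k` is
extended by `0`; mass at infinity is then dropped without affecting the integrals. -/
theorem exists_saddle_value_of_tendsto_cocompact (hk : ∀ θ t, 0 ≤ k θ t) (hT' : T'.Nonempty)
    (hkΘ : ∀ θ, Continuous (k θ)) (hkT : ∀ t ∈ T', Continuous fun θ => k θ t)
    (hk0 : ∀ t ∈ T', Tendsto (fun θ => k θ t) (cocompact Θ) (𝓝 0)) :
    ∃ (ν : Measure Θ) (π : ProbabilityMeasure T) (v : ℝ), ν univ ≤ 1 ∧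
      (∀ θ, ∫⁻ t, ENNReal.ofReal (k θ t) ∂(π : Measure T) ≤ ENNReal.ofReal v) ∧
      ∀ t ∈ T', ENNReal.ofReal v ≤ ∫⁻ θ, ENNReal.ofReal (k θ t) ∂ν := by
  let _ : MeasurableSpace (OnePoint Θ) := borel _
  have : BorelSpace (OnePoint Θ) := ⟨rfl⟩
  let κ (y : OnePoint Θ) (t : T) : ℝ := y.elim 0 (k · t)
  have κ_cont (t) (ht : t ∈ T') : Continuous fun y => κ y t :=
    (OnePoint.continuousMapMk ⟨_, hkT t ht⟩ 0 (by simpa using hk0 t ht)).continuous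
  have κ_nonneg (y t) : 0 ≤ κ y t := by
    induction y using OnePoint.rec with
    | infty => exact le_rfl
    | coe θ => exact hk θ t
  obtain ⟨ρ, π, saddle⟩ := exists_saddle_probabilityMeasure κ
    (range_nonempty ((↑) : Θ → OnePoint Θ)) hT' (forall_mem_range.2 hkΘ) κ_cont
  obtain ⟨t₁, ht₁⟩ := hT'
  refine ⟨(ρ : Measure (OnePoint Θ)).comap (↑), π, ⨆ θ, ∫ t, k θ t ∂(π : Measure T), ?_,
    fun θ => ?_, fun t ht => ?_⟩
  · rw [OnePoint.isOpenEmbedding_coe.measurableEmbedding.comap_apply]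
    exact prob_le_one
  · rw [← ofReal_integral_eq_lintegral_ofReal
      ((hkΘ θ).integrable_of_hasCompactSupport (.of_compactSpace _)) (.of_forall (hk θ))]
    exact ENNReal.ofReal_le_ofReal <| le_ciSup (f := fun θ => ∫ t, k θ t ∂(π : Measure T))
      ⟨_, forall_mem_range.2 fun θ => saddle _ (mem_range_self θ) t₁ ht₁⟩ θ
  · change _ ≤ ∫⁻ θ : Θ, ENNReal.ofReal (κ θ t) ∂_
    rw [lintegral_comap_coe_onePoint _ (f := fun y => ENNReal.ofReal (κ y t)) (by simp [κ]),
      ← ofReal_integral_eq_lintegral_ofReal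
      ((κ_cont t ht).integrable_of_hasCompactSupport (.of_compactSpace _))
      (.of_forall fun y => κ_nonneg y t)]
    exact ENNReal.ofReal_le_ofReal <| ciSup_le fun θ => saddle _ (mem_range_self θ) t ht

theorem exists_dual_measures_of_tendsto_cocompact (hk : ∀ θ t, 0 < k θ t) (hT' : T'.Nonempty)
    (hkΘ : ∀ θ, Continuous (k θ)) (hkT : ∀ t ∈ T', Continuous fun θ => k θ t)
    (hk0 : ∀ t ∈ T', Tendsto (fun θ => k θ t) (cocompact Θ) (𝓝 0)) :
    ∃ (ν : Measure Θ) (π : Measure T), IsFiniteMeasure π ∧ ν univ ≤ π univ ∧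
      (∀ θ, ∫⁻ t, ENNReal.ofReal (k θ t) ∂π ≤ 1) ∧
      ∀ t ∈ T', 1 ≤ ∫⁻ θ, ENNReal.ofReal (k θ t) ∂ν := by
  obtain ⟨ν, π, v, hν, hπ, hT⟩ :=
    exists_saddle_value_of_tendsto_cocompact (fun θ t => (hk θ t).le) hT' hkΘ hkT hk0
  have v_pos : ENNReal.ofReal v ≠ 0 := by
    refine (lt_of_lt_of_le ?_ (hπ (Classical.arbitrary Θ))).ne'
    rw [lintegral_pos_iff_support (hkΘ _).measurable.ennreal_ofReal]
    have : (Function.support fun t => ENNReal.ofReal (k (Classical.arbitrary Θ) t)) = univ :=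
      Function.support_eq_univ fun t => (ENNReal.ofReal_pos.2 (hk _ t)).ne'
    simp [this]
  have c_ne_top : (ENNReal.ofReal v)⁻¹ ≠ ∞ := ENNReal.inv_ne_top.2 v_pos
  refine ⟨(ENNReal.ofReal v)⁻¹ • ν, (ENNReal.ofReal v)⁻¹ • (π : Measure T),
    Measure.smul_finite _ c_ne_top, ?_, fun θ => ?_, fun t ht => ?_⟩
  · rw [Measure.smul_apply, Measure.smul_apply, measure_univ (μ := (π : Measure T))]
    gcongr
  · rw [lintegral_smul_measure, smul_eq_mul,
      ← ENNReal.inv_mul_cancel v_pos ENNReal.ofReal_ne_top]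
    gcongr
    exact hπ θ
  · rw [lintegral_smul_measure, smul_eq_mul,
      ← ENNReal.inv_mul_cancel v_pos ENNReal.ofReal_ne_top]
    gcongr
    exact hT t ht

end Minimax

/-! ### Weak duality and complementary slackness -/

section WeakDuality

variable {α β : Type*} [MeasurableSpace α] [MeasurableSpace β] {μ : Measure α} {lam : Measure β}
  [SFinite μ] {K : β → α → ℝ≥0∞} {g : α → ℝ≥0∞}

theorem measure_univ_le_lintegral_of_feasible [SFinite lam]
    (hK : AEMeasurable (Function.uncurry K) (lam.prod μ))
    (hμ : ∀ᵐ t ∂lam, 1 ≤ ∫⁻ θ, K t θ ∂μ) (hlam : ∀ᵐ θ ∂μ, ∫⁻ t, K t θ ∂lam ≤ g θ) :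
    lam univ ≤ ∫⁻ θ, g θ ∂μ :=
  calc lam univ = ∫⁻ _, 1 ∂lam := lintegral_one.symm
    _ ≤ ∫⁻ t, ∫⁻ θ, K t θ ∂μ ∂lam := lintegral_mono_ae hμ
    _ = ∫⁻ θ, ∫⁻ t, K t θ ∂lam ∂μ := lintegral_lintegral_swap hK
    _ ≤ ∫⁻ θ, g θ ∂μ := lintegral_mono_ae hlam

theorem complementary_slackness [IsFiniteMeasure lam]
    (hK : AEMeasurable (Function.uncurry K) (lam.prod μ)) (hg : AEMeasurable g μ)
    (hμ : ∀ᵐ t ∂lam, 1 ≤ ∫⁻ θ, K t θ ∂μ) (hlam : ∀ᵐ θ ∂μ, ∫⁻ t, K t θ ∂lam ≤ g θ)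
    (hle : ∫⁻ θ, g θ ∂μ ≤ lam univ) :
    (∀ᵐ t ∂lam, ∫⁻ θ, K t θ ∂μ = 1) ∧ ∀ᵐ θ ∂μ, ∫⁻ t, K t θ ∂lam = g θ := by
  have swap := lintegral_lintegral_swap hK
  have one_le : ∫⁻ _, 1 ∂lam ≤ ∫⁻ t, ∫⁻ θ, K t θ ∂μ ∂lam := lintegral_mono_ae hμ
  have le_g : ∫⁻ θ, ∫⁻ t, K t θ ∂lam ∂μ ≤ ∫⁻ θ, g θ ∂μ := lintegral_mono_ae hlam
  rw [lintegral_one] at one_le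
  constructor
  · refine (ae_eq_of_ae_le_of_lintegral_le hμ ?_ hK.lintegral_prod_right' ?_).symm
    · simp
    · rw [lintegral_one, swap]
      exact le_g.trans hle
  · refine ae_eq_of_ae_le_of_lintegral_le hlam ?_ hg ?_
    · exact ne_top_of_le_ne_top (measure_ne_top lam univ) (le_g.trans hle)
    · exact hle.trans (one_le.trans_eq swap)

theorem eq_biInf_and_biInf_eq_biSup_and_biSup_eq {ι κ γ : Type*} [CompleteLattice γ] {P : Set ι}
    {D : Set κ} {f : ι → γ} {h : κ → γ} (weak : ∀ x ∈ P, ∀ y ∈ D, h y ≤ f x) {x₀ : ι} {y₀ : κ}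
    (hx₀ : x₀ ∈ P) (hy₀ : y₀ ∈ D) (hle : f x₀ ≤ h y₀) :
    f x₀ = (⨅ x ∈ P, f x) ∧ (⨅ x ∈ P, f x) = (⨆ y ∈ D, h y) ∧ (⨆ y ∈ D, h y) = h y₀ := by
  have inf_le : ⨅ x ∈ P, f x ≤ f x₀ := biInf_le f hx₀
  have le_sup : h y₀ ≤ ⨆ y ∈ D, h y := le_biSup h hy₀
  have sup_le_inf : ⨆ y ∈ D, h y ≤ ⨅ x ∈ P, f x :=
    iSup₂_le fun y hy => le_iInf₂ fun x hx => weak x hx y hy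
  exact ⟨((hle.trans le_sup).trans sup_le_inf).antisymm inf_le,
    ((inf_le.trans hle).trans le_sup).antisymm sup_le_inf,
    (sup_le_inf.trans (inf_le.trans hle)).antisymm le_sup⟩

end WeakDuality

/-! ### Differentiation under the integral sign for holomorphic families -/

section HolomorphicFamily

variable {α E : Type*} [MeasurableSpace α] [NormedAddCommGroup E] [NormedSpace ℂ E]
  {p : Measure α} {U : Set ℂ} {G : ℂ → α → E}

/-- A family of functions `G z` on a measure space that depends holomorphically on `z ∈ U` and is
locally uniformly bounded. On an open `U` the class is stable under `d/dz`, so that derivatives of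
every order may be taken under the integral sign. -/
structure HolomorphicFamily (p : Measure α) (U : Set ℂ) (G : ℂ → α → E) : Prop where
  aestronglyMeasurable : ∀ z ∈ U, AEStronglyMeasurable (G z) p
  differentiableOn : ∀ᵐ θ ∂p, DifferentiableOn ℂ (G · θ) U
  locally_bounded : ∀ z ∈ U, ∃ ρ > 0, ∃ C : ℝ, ∀ᵐ θ ∂p, ∀ w ∈ Metric.ball z ρ, ‖G w θ‖ ≤ C

namespace HolomorphicFamily

lemma integrable [IsFiniteMeasure p] (h : HolomorphicFamily p U G) {z : ℂ} (hz : z ∈ U) :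
    Integrable (G z) p := by
  obtain ⟨ρ, hρ, C, hC⟩ := h.locally_bounded z hz
  refine .of_bound (h.aestronglyMeasurable z hz) C ?_
  filter_upwards [hC] with θ hθ using hθ z (Metric.mem_ball_self hρ)

lemma aestronglyMeasurable_deriv (hU : IsOpen U) (h : HolomorphicFamily p U G) {z : ℂ}
    (hz : z ∈ U) : AEStronglyMeasurable (fun θ => deriv (G · θ) z) p := by
  classical
  refine aestronglyMeasurable_of_tendsto_ae (𝓝[≠] z)
    (f := fun w θ => if w ∈ U then slope (G · θ) z w else 0) (fun w => ?_) ?_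
  · by_cases hw : w ∈ U
    · simp only [hw, if_true, slope_def_module]
      exact ((h.aestronglyMeasurable w hw).sub (h.aestronglyMeasurable z hz)).const_smul (w - z)⁻¹
    · simpa only [hw, if_false] using aestronglyMeasurable_const
  · filter_upwards [h.differentiableOn] with θ hθ
    refine (hasDerivAt_iff_tendsto_slope.1
      (hθ.differentiableAt (hU.mem_nhds hz)).hasDerivAt).congr' ?_
    filter_upwards [nhdsWithin_le_nhds (hU.mem_nhds hz)] with w hw
    rw [if_pos hw]

lemma deriv_locally_bounded (hU : IsOpen U) (h : HolomorphicFamily p U G) {z : ℂ} (hz : z ∈ U) :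
    ∃ ρ > 0, ∃ C : ℝ, ∀ᵐ θ ∂p, ∀ w ∈ Metric.ball z ρ, ‖deriv (G · θ) w‖ ≤ C := by
  obtain ⟨ρ, hρ, C, hC⟩ := h.locally_bounded z hz
  obtain ⟨r, hr, hrU⟩ := Metric.isOpen_iff.1 hU z hz
  have hδ : 0 < min r ρ / 3 := by positivity
  refine ⟨min r ρ / 3, hδ, C / (min r ρ / 3), ?_⟩
  filter_upwards [h.differentiableOn, hC] with θ hθ hCθ w hw
  have hball : Metric.closedBall w (min r ρ / 3) ⊆ Metric.ball z (min r ρ) := by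
    refine Metric.closedBall_subset_ball' ?_
    rw [Metric.mem_ball] at hw
    linarith
  refine Complex.norm_deriv_le_of_forall_mem_sphere_norm_le hδ
    (DifferentiableOn.diffContOnCl (hθ.mono fun v hv => hrU ?_)) fun v hv => hCθ v ?_
  · exact Metric.ball_subset_ball (min_le_left r ρ)
      (hball (Metric.closure_ball_subset_closedBall hv))
  · exact Metric.ball_subset_ball (min_le_right r ρ) (hball (Metric.sphere_subset_closedBall hv))

lemma hasDerivAt_integral [IsFiniteMeasure p] (hU : IsOpen U) (h : HolomorphicFamily p U G)
    {z : ℂ} (hz : z ∈ U) :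
    HasDerivAt (fun z => ∫ θ, G z θ ∂p) (∫ θ, deriv (G · θ) z ∂p) z := by
  obtain ⟨ρ, hρ, C, hC⟩ := h.deriv_locally_bounded hU hz
  refine (hasDerivAt_integral_of_dominated_loc_of_deriv_le (s := Metric.ball z ρ ∩ U)
    (F' := fun z θ => deriv (G · θ) z) (bound := fun _ => C)
    (inter_mem (Metric.ball_mem_nhds z hρ) (hU.mem_nhds hz)) ?_ (h.integrable hz)
    (h.aestronglyMeasurable_deriv hU hz) ?_ (integrable_const C) ?_).2
  · filter_upwards [hU.mem_nhds hz] with w hw using h.aestronglyMeasurable w hw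
  · filter_upwards [hC] with θ hθ w hw using hθ w hw.1
  · filter_upwards [h.differentiableOn] with θ hθ w hw
    exact (hθ.differentiableAt (hU.mem_nhds hw.2)).hasDerivAt

lemma differentiableOn_integral [IsFiniteMeasure p] (hU : IsOpen U) (h : HolomorphicFamily p U G) :
    DifferentiableOn ℂ (fun z => ∫ θ, G z θ ∂p) U :=
  fun _ hz => (h.hasDerivAt_integral hU hz).differentiableAt.differentiableWithinAt

variable [CompleteSpace E]

protected lemma deriv (hU : IsOpen U) (h : HolomorphicFamily p U G) :
    HolomorphicFamily p U (fun z θ => deriv (G · θ) z) where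
  aestronglyMeasurable _ hz := h.aestronglyMeasurable_deriv hU hz
  differentiableOn := by filter_upwards [h.differentiableOn] with θ hθ using hθ.deriv hU
  locally_bounded _ hz := h.deriv_locally_bounded hU hz

protected lemma iteratedDeriv (hU : IsOpen U) (h : HolomorphicFamily p U G) (n : ℕ) :
    HolomorphicFamily p U (fun z θ => iteratedDeriv n (G · θ) z) := by
  induction n with
  | zero => simpa only [iteratedDeriv_zero] using h
  | succ n ih => simpa only [iteratedDeriv_succ] using ih.deriv hU

lemma iteratedDeriv_integral [IsFiniteMeasure p] (hU : IsOpen U) (h : HolomorphicFamily p U G)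
    (n : ℕ) {z : ℂ} (hz : z ∈ U) :
    iteratedDeriv n (fun z => ∫ θ, G z θ ∂p) z = ∫ θ, iteratedDeriv n (G · θ) z ∂p := by
  induction n generalizing z with
  | zero => simp only [iteratedDeriv_zero]
  | succ n ih =>
    have hev : iteratedDeriv n (fun z => ∫ θ, G z θ ∂p) =ᶠ[𝓝 z]
        fun z => ∫ θ, iteratedDeriv n (G · θ) z ∂p := by
      filter_upwards [hU.mem_nhds hz] with w hw using ih hw
    rw [iteratedDeriv_succ, hev.deriv_eq,
      ((h.iteratedDeriv hU n).hasDerivAt_integral hU hz).deriv]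
    simp only [iteratedDeriv_succ]

end HolomorphicFamily

end HolomorphicFamily

/-! ### Complex extension of real-analytic functions -/

lemma exists_complex_extension_of_analyticAt {c : ℝ → ℝ} {s : ℝ} (hc : AnalyticAt ℝ c s) :
    ∃ C : ℂ → ℂ, AnalyticAt ℂ C s ∧ ∀ᶠ x : ℝ in 𝓝 s, C x = c x := by
  obtain ⟨p, hp⟩ := hc
  let q : FormalMultilinearSeries ℂ ℂ ℂ := .ofScalars ℂ fun n => (p.coeff n : ℂ)
  have norm_q (n : ℕ) : ‖q n‖ = ‖p n‖ := by
    rw [FormalMultilinearSeries.ofScalars_norm, Complex.norm_real,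
      ← FormalMultilinearSeries.norm_apply_eq_norm_coef]
  obtain ⟨r, hr0, hrp⟩ := ENNReal.lt_iff_exists_nnreal_btwn.1 hp.radius_pos
  obtain ⟨K, -, hK⟩ := p.norm_mul_pow_le_of_lt_radius hrp
  have hq : 0 < q.radius := hr0.trans_le <| q.le_radius_of_bound K fun n => by
    rw [norm_q]; exact hK n
  have hqs : AnalyticAt ℂ q.sum ((s : ℂ) - s) := by
    simpa only [sub_self] using (q.hasFPowerSeriesOnBall hq).analyticAt
  refine ⟨fun z => q.sum (z - s), hqs.fun_comp_of_eq (by fun_prop) rfl, ?_⟩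
  filter_upwards [hp.eventually_hasSum_sub] with x hx
  rw [← (Complex.hasSum_ofReal.2 hx).tsum_eq]
  refine tsum_congr fun n => ?_
  simp only [q, FormalMultilinearSeries.apply_eq_pow_smul_coeff,
    FormalMultilinearSeries.coeff_ofScalars, smul_eq_mul, Complex.ofReal_mul, Complex.ofReal_pow,
    Complex.ofReal_sub]

/-! ### The Gaussian kernel and its derivatives -/

/-- The kernel `exp (-θ² z / 2 + θ d(z))`. With `z = 1/t - 1/t₀` it is the holomorphic extension of
`t ↦ r_θ(t, b(t)) / r_θ(t₀, x₀)`. -/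
noncomputable def gaussKernel (d : ℂ → ℂ) (θ : ℝ) (z : ℂ) : ℂ :=
  Complex.exp (-((θ ^ 2 / 2 : ℝ) : ℂ) * z + θ * d z)

section GaussKernel

variable {d : ℂ → ℂ} {θ : ℝ} {z : ℂ} {p : Measure ℝ}

lemma norm_gaussKernel :
    ‖gaussKernel d θ z‖ = Real.exp (-(θ ^ 2 / 2) * z.re + θ * (d z).re) := by
  rw [gaussKernel, Complex.norm_exp, Complex.add_re, ← Complex.ofReal_neg, Complex.re_ofReal_mul,
    Complex.re_ofReal_mul]

lemma gaussKernel_eq_ofReal_norm (hz : z.im = 0) (hd : (d z).im = 0) :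
    gaussKernel d θ z = (‖gaussKernel d θ z‖ : ℝ) := by
  rw [norm_gaussKernel, gaussKernel, Complex.ofReal_exp]
  congr 1
  apply Complex.ext <;> simp [hz, hd, -neg_mul]

lemma integral_gaussKernel_eq_ofReal (hz : z.im = 0) (hd : (d z).im = 0) :
    ∫ θ, gaussKernel d θ z ∂p = (∫ θ, ‖gaussKernel d θ z‖ ∂p : ℝ) := by
  rw [← integral_complex_ofReal]
  exact integral_congr_ae (.of_forall fun _ => gaussKernel_eq_ofReal_norm hz hd)

lemma continuous_gaussKernel : Continuous fun θ : ℝ => gaussKernel d θ z := by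
  unfold gaussKernel
  fun_prop

lemma continuousAt_gaussKernel (hd : ContinuousAt d z) : ContinuousAt (gaussKernel d θ) z :=
  ((continuousAt_id.const_mul _).add (hd.const_mul _)).cexp

lemma differentiableOn_gaussKernel {U : Set ℂ} (hd : DifferentiableOn ℂ d U) :
    DifferentiableOn ℂ (gaussKernel d θ) U :=
  ((differentiableOn_id.const_mul _).add (hd.const_mul _)).cexp

lemma holomorphicFamily_gaussKernel {U : Set ℂ} {A : ℝ} (hU : IsOpen U)
    (hd : DifferentiableOn ℂ d U) (hA : ∀ᵐ θ ∂p, ∀ z ∈ U, ‖gaussKernel d θ z‖ ≤ A) :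
    HolomorphicFamily p U fun z θ => gaussKernel d θ z where
  aestronglyMeasurable _ _ := continuous_gaussKernel.aestronglyMeasurable
  differentiableOn := .of_forall fun _ => differentiableOn_gaussKernel hd
  locally_bounded z hz := by
    obtain ⟨ρ, hρ, hρU⟩ := Metric.isOpen_iff.1 hU z hz
    exact ⟨ρ, hρ, A, hA.mono fun θ hθ w hw => hθ w (hρU hw)⟩

/-- The maximum of `-θ² Re z / 2 + θ M Re z` over `θ` is attained at `θ = M`. -/
lemma norm_gaussKernel_le {M : ℝ} (hθ : 0 ≤ θ) (hz : 0 ≤ z.re) (hM : (d z).re ≤ M * z.re) :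
    ‖gaussKernel d θ z‖ ≤ Real.exp (z.re * (M ^ 2 / 2)) := by
  rw [norm_gaussKernel, Real.exp_le_exp]
  nlinarith [mul_le_mul_of_nonneg_left hM hθ, mul_nonneg hz (sq_nonneg (θ - M))]

end GaussKernel

lemma sum_range_pow_mul_pow_le {n : ℕ} {q x y w : ℝ} (hq : 0 < q) (hq4 : q ≤ 1 / 4) (hx : 0 ≤ x)
    (hy : 0 ≤ y) (hw : 0 ≤ w) (hyx : y ≤ q * x + w) :
    ∑ k ∈ Finset.range n, x ^ (n - (k + 1)) * y ^ (k + 1) ≤ 4 * q * x ^ n + (2 * w / q) ^ n := by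
  have hsplit {v : ℝ} {k : ℕ} (hk : k ∈ Finset.range n) :
      v ^ (n - (k + 1)) * v ^ (k + 1) = v ^ n := by
    rw [← pow_add, Nat.sub_add_cancel (Finset.mem_range.1 hk)]
  rcases le_total w (q * x) with h | h
  · have hterm : ∀ k ∈ Finset.range n,
        x ^ (n - (k + 1)) * y ^ (k + 1) ≤ 2 * q * x ^ n * (1 / 2) ^ k := fun k hk => by
      calc x ^ (n - (k + 1)) * y ^ (k + 1)
          ≤ x ^ (n - (k + 1)) * (2 * q * x) ^ (k + 1) := by gcongr; linarith
        _ = 2 * q * x ^ n * (2 * q) ^ k := by rw [← hsplit (v := x) hk, mul_pow]; ring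
        _ ≤ 2 * q * x ^ n * (1 / 2) ^ k := by gcongr; linarith
    calc ∑ k ∈ Finset.range n, x ^ (n - (k + 1)) * y ^ (k + 1)
        ≤ 2 * q * x ^ n * ∑ k ∈ Finset.range n, (1 / 2 : ℝ) ^ k := by
          rw [Finset.mul_sum]; exact Finset.sum_le_sum hterm
      _ ≤ 2 * q * x ^ n * 2 := by gcongr; exact sum_geometric_two_le n
      _ ≤ 4 * q * x ^ n + (2 * w / q) ^ n := by
          have : 0 ≤ (2 * w / q) ^ n := by positivity
          linarith
  · have hxw : x ≤ w / q := by rw [le_div_iff₀ hq]; linarith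
    have hyw : y ≤ w / q := by rw [le_div_iff₀ hq]; nlinarith
    have hterm : ∀ k ∈ Finset.range n, x ^ (n - (k + 1)) * y ^ (k + 1) ≤ (w / q) ^ n :=
      fun k hk => by rw [← hsplit hk]; gcongr
    calc ∑ k ∈ Finset.range n, x ^ (n - (k + 1)) * y ^ (k + 1)
        ≤ n * (w / q) ^ n := by simpa using Finset.sum_le_card_nsmul _ _ _ hterm
      _ ≤ 2 ^ n * (w / q) ^ n := by gcongr; exact_mod_cast Nat.lt_two_pow_self.le
      _ ≤ 4 * q * x ^ n + (2 * w / q) ^ n := by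
          rw [← mul_pow, mul_div_assoc]
          exact le_add_of_nonneg_left (by positivity)

lemma iteratedDeriv_mul_cexp_const_mul {h : ℂ → ℂ} {z : ℂ} (c : ℂ) (n : ℕ)
    (hh : ContDiffAt ℂ n h z) :
    iteratedDeriv n (fun w => h w * Complex.exp (c * w)) z =
      ∑ k ∈ Finset.range (n + 1), n.choose k * iteratedDeriv k h z * (c ^ (n - k) *
        Complex.exp (c * z)) := by
  rw [iteratedDeriv_fun_mul hh (by fun_prop)]
  simp only [iteratedDeriv_cexp_const_mul]

lemma norm_iteratedDeriv_mul_cexp_sub_le {h : ℂ → ℂ} {z : ℂ} {M τ : ℝ} (c : ℂ) (n : ℕ)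
    (hh : AnalyticAt ℂ h z) (hτ : 0 ≤ τ)
    (hM : ∀ k, ‖iteratedDeriv k h z‖ ≤ k.factorial * M * τ ^ k) :
    ‖iteratedDeriv n (fun w => h w * Complex.exp (c * w)) z - c ^ n * (h z * Complex.exp (c * z))‖ ≤
      ‖Complex.exp (c * z)‖ * M *
        ∑ k ∈ Finset.range n, ‖c‖ ^ (n - (k + 1)) * (n * τ) ^ (k + 1) := by
  have hM0 : 0 ≤ M := (norm_nonneg _).trans ((hM 0).trans_eq (by simp))
  rw [iteratedDeriv_mul_cexp_const_mul c n hh.contDiffAt, Finset.sum_range_succ']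
  simp only [Nat.choose_zero_right, iteratedDeriv_zero, Nat.sub_zero, Nat.cast_one, one_mul]
  rw [mul_left_comm (h z), add_sub_cancel_right, Finset.mul_sum]
  refine norm_sum_le_of_le _ fun k _ => ?_
  have hchoose : (n.choose (k + 1) : ℝ) * (k + 1).factorial ≤ n ^ (k + 1) := by
    have := Nat.descFactorial_le_pow n (k + 1)
    rw [Nat.descFactorial_eq_factorial_mul_choose, mul_comm] at this
    exact_mod_cast this
  rw [norm_mul, norm_mul, norm_mul, norm_pow, Complex.norm_natCast]
  calc (n.choose (k + 1) : ℝ) * ‖iteratedDeriv (k + 1) h z‖ *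
        (‖c‖ ^ (n - (k + 1)) * ‖Complex.exp (c * z)‖)
      ≤ n.choose (k + 1) * ((k + 1).factorial * M * τ ^ (k + 1)) *
        (‖c‖ ^ (n - (k + 1)) * ‖Complex.exp (c * z)‖) := by gcongr; exact hM _
    _ = n.choose (k + 1) * (k + 1).factorial * (M * τ ^ (k + 1) *
        (‖c‖ ^ (n - (k + 1)) * ‖Complex.exp (c * z)‖)) := by ring
    _ ≤ n ^ (k + 1) * (M * τ ^ (k + 1) *
        (‖c‖ ^ (n - (k + 1)) * ‖Complex.exp (c * z)‖)) := by gcongr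
    _ = ‖Complex.exp (c * z)‖ * M * (‖c‖ ^ (n - (k + 1)) * (n * τ) ^ (k + 1)) := by
        rw [mul_pow]; ring

section GaussKernelDeriv

variable {d : ℂ → ℂ} {z : ℂ} {r D a θ : ℝ}

/-- Cauchy's estimate on the circle of radius `r a / θ`, on which `θ (d w - d z)` stays bounded. -/
lemma norm_iteratedDeriv_cexp_mul_sub_le (hr : 0 < r) (ha : 0 < a) (hθ : a ≤ θ)
    (hd : DifferentiableOn ℂ d (Metric.closedBall z r))
    (hD : ∀ w ∈ Metric.closedBall z r, ‖d w - d z‖ ≤ D * ‖w - z‖) (k : ℕ) :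
    ‖iteratedDeriv k (fun w => Complex.exp (θ * (d w - d z))) z‖ ≤
      k.factorial * Real.exp (D * (r * a)) * (θ / (r * a)) ^ k := by
  have hθ0 : 0 < θ := ha.trans_le hθ
  have hρ : 0 < r * a / θ := by positivity
  have hρr : r * a / θ ≤ r := by rw [div_le_iff₀ hθ0]; gcongr
  have hdiff : DifferentiableOn ℂ (fun w => Complex.exp (θ * (d w - d z)))
      (Metric.closedBall z r) := ((hd.sub_const _).const_mul _).cexp
  have hball : closure (Metric.ball z (r * a / θ)) ⊆ Metric.closedBall z r :=
    Metric.closure_ball_subset_closedBall.trans (Metric.closedBall_subset_closedBall hρr)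
  have hsphere : ∀ w ∈ Metric.sphere z (r * a / θ),
      ‖Complex.exp (θ * (d w - d z))‖ ≤ Real.exp (D * (r * a)) := fun w hw => by
    have hwr : w ∈ Metric.closedBall z r :=
      Metric.closedBall_subset_closedBall hρr (Metric.sphere_subset_closedBall hw)
    rw [mem_sphere_iff_norm] at hw
    rw [Complex.norm_exp, Real.exp_le_exp]
    calc (θ * (d w - d z)).re ≤ ‖θ * (d w - d z)‖ := Complex.re_le_norm _
      _ = θ * ‖d w - d z‖ := by rw [norm_mul, Complex.norm_of_nonneg hθ0.le]
      _ ≤ θ * (D * (r * a / θ)) := by gcongr; exact hw ▸ hD w hwr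
      _ = D * (r * a) := by field_simp
  refine (Complex.norm_iteratedDeriv_le_of_forall_mem_sphere_norm_le k hρ
    (hdiff.mono hball).diffContOnCl hsphere).trans_eq ?_
  rw [div_eq_mul_inv, ← inv_pow, inv_div]

lemma norm_iteratedDeriv_gaussKernel_sub_le_sum (hr : 0 < r) (ha : 0 < a) (hθ : a ≤ θ)
    (hd : DifferentiableOn ℂ d (Metric.closedBall z r))
    (hD : ∀ w ∈ Metric.closedBall z r, ‖d w - d z‖ ≤ D * ‖w - z‖) (n : ℕ) :
    ‖iteratedDeriv n (gaussKernel d θ) z - (-((θ ^ 2 / 2 : ℝ) : ℂ)) ^ n * gaussKernel d θ z‖ ≤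
      ‖gaussKernel d θ z‖ * Real.exp (D * (r * a)) *
        ∑ k ∈ Finset.range n, (θ ^ 2 / 2) ^ (n - (k + 1)) * (n * (θ / (r * a))) ^ (k + 1) := by
  have hθ0 : 0 < θ := ha.trans_le hθ
  set c : ℂ := -((θ ^ 2 / 2 : ℝ) : ℂ) with hc
  have hcn : ‖c‖ = θ ^ 2 / 2 := by rw [hc, norm_neg, Complex.norm_of_nonneg (by positivity)]
  have hfactor : gaussKernel d θ = fun w =>
      Complex.exp (θ * d z) * (Complex.exp (θ * (d w - d z)) * Complex.exp (c * w)) := by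
    funext w
    rw [gaussKernel, ← Complex.exp_add, ← Complex.exp_add]
    congr 1; ring
  have hanalytic : AnalyticAt ℂ (fun w => Complex.exp (θ * (d w - d z))) z :=
    ((hd.sub_const _).const_mul _).cexp.analyticAt (Metric.closedBall_mem_nhds z hr)
  have hleibniz := norm_iteratedDeriv_mul_cexp_sub_le c n hanalytic (by positivity)
    (norm_iteratedDeriv_cexp_mul_sub_le hr ha hθ hd hD)
  simp only [hcn, sub_self, mul_zero, Complex.exp_zero, one_mul] at hleibniz
  simp only [hfactor, iteratedDeriv_const_mul_field, sub_self, mul_zero, Complex.exp_zero, one_mul]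
  rw [mul_left_comm, ← mul_sub, norm_mul, norm_mul, mul_assoc, mul_assoc,
    ← mul_assoc ‖Complex.exp (c * z)‖]
  gcongr

lemma exists_norm_iteratedDeriv_gaussKernel_sub_le (hr : 0 < r) (ha : 0 < a) (hD : 0 ≤ D)
    {S : Set ℂ} (hdS : ∀ z ∈ S, DifferentiableOn ℂ d (Metric.closedBall z r))
    (hDS : ∀ z ∈ S, ∀ w ∈ Metric.closedBall z r, ‖d w - d z‖ ≤ D * ‖w - z‖) :
    ∃ C > 0, ∃ B > 0, ∀ z ∈ S, ∀ θ ≥ a, ∀ n : ℕ,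
      ‖iteratedDeriv n (gaussKernel d θ) z - (-((θ ^ 2 / 2 : ℝ) : ℂ)) ^ n * gaussKernel d θ z‖ ≤
        ‖gaussKernel d θ z‖ * (1 / 2 * (θ ^ 2 / 2) ^ n + C * (B * (n : ℝ) ^ 2) ^ n) := by
  set K := Real.exp (D * (r * a))
  have hK : 1 ≤ K := Real.one_le_exp (by positivity)
  set q : ℝ := 1 / (8 * K) with hq
  have hq0 : 0 < q := by positivity
  have hq4 : q ≤ 1 / 4 := by rw [hq]; gcongr; linarith
  refine ⟨K, by positivity, 1 / (q * (r * a)) ^ 2, by positivity, fun z hz θ hθ n => ?_⟩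
  have hθ0 : 0 < θ := ha.trans_le hθ
  have amgm : n * (θ / (r * a)) ≤ q * (θ ^ 2 / 2) + n ^ 2 / (2 * q * (r * a) ^ 2) := by
    have : q * (θ ^ 2 / 2) + n ^ 2 / (2 * q * (r * a) ^ 2) - n * (θ / (r * a)) =
        (q * θ - n / (r * a)) ^ 2 / (2 * q) := by field_simp; ring
    have : 0 ≤ (q * θ - n / (r * a)) ^ 2 / (2 * q) := by positivity
    linarith
  have hsum := sum_range_pow_mul_pow_le (n := n) hq0 hq4 (by positivity) (by positivity)
    (by positivity) amgm
  refine (norm_iteratedDeriv_gaussKernel_sub_le_sum hr ha hθ (hdS z hz) (hDS z hz) n).trans ?_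
  calc ‖gaussKernel d θ z‖ * K *
        ∑ k ∈ Finset.range n, (θ ^ 2 / 2) ^ (n - (k + 1)) * (n * (θ / (r * a))) ^ (k + 1)
      ≤ ‖gaussKernel d θ z‖ * K * (4 * q * (θ ^ 2 / 2) ^ n +
        (2 * (n ^ 2 / (2 * q * (r * a) ^ 2)) / q) ^ n) := by gcongr
    _ = ‖gaussKernel d θ z‖ * (4 * (q * K) * (θ ^ 2 / 2) ^ n +
        K * (1 / (q * (r * a)) ^ 2 * n ^ 2) ^ n) := by
      rw [show 2 * ((n : ℝ) ^ 2 / (2 * q * (r * a) ^ 2)) / q = 1 / (q * (r * a)) ^ 2 * n ^ 2 by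
        field_simp]
      ring
    _ = ‖gaussKernel d θ z‖ * (1 / 2 * (θ ^ 2 / 2) ^ n +
        K * (1 / (q * (r * a)) ^ 2 * n ^ 2) ^ n) := by
      rw [show q * K = 1 / 8 by rw [hq]; field_simp]; norm_num

end GaussKernelDeriv

/-! ### Flat functions on a disc tangent to the imaginary axis -/

/-- The open disc with diameter `(0, δ)`, which is tangent to the imaginary axis at `0`. -/
def tangentDisc (δ : ℝ) : Set ℂ := {z | ‖z‖ ^ 2 < δ * z.re}

section TangentDisc

variable {δ : ℝ} {z : ℂ}

lemma mem_tangentDisc : z ∈ tangentDisc δ ↔ ‖z‖ ^ 2 < δ * z.re := Iff.rfl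

lemma tangentDisc_eq_ball (hδ : 0 < δ) :
    tangentDisc δ = Metric.ball ((δ / 2 : ℝ) : ℂ) (δ / 2) := by
  ext z
  rw [mem_ball_iff_norm, ← sq_lt_sq₀ (norm_nonneg _) (by positivity), mem_tangentDisc]
  simp only [← Complex.normSq_eq_norm_sq, Complex.normSq_apply, Complex.sub_re, Complex.sub_im,
    Complex.ofReal_re, Complex.ofReal_im]
  constructor <;> intro h <;> nlinarith

lemma isOpen_tangentDisc (hδ : 0 < δ) : IsOpen (tangentDisc δ) := by
  rw [tangentDisc_eq_ball hδ]; exact Metric.isOpen_ball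

lemma convex_tangentDisc (hδ : 0 < δ) : Convex ℝ (tangentDisc δ) := by
  rw [tangentDisc_eq_ball hδ]; exact convex_ball _ _

lemma re_pos_of_mem_tangentDisc (hδ : 0 < δ) (hz : z ∈ tangentDisc δ) : 0 < z.re :=
  pos_of_mul_pos_right ((sq_nonneg ‖z‖).trans_lt hz) hδ.le

lemma norm_lt_of_mem_tangentDisc (hδ : 0 < δ) (hz : z ∈ tangentDisc δ) : ‖z‖ < δ := by
  have hnorm : 0 < ‖z‖ := (re_pos_of_mem_tangentDisc hδ hz).trans_le (Complex.re_le_norm z)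
  refine lt_of_mul_lt_mul_right (a := ‖z‖) ?_ hnorm.le
  calc ‖z‖ * ‖z‖ = ‖z‖ ^ 2 := (sq _).symm
    _ < δ * z.re := hz
    _ ≤ δ * ‖z‖ := by gcongr; exact Complex.re_le_norm z

lemma ofReal_mem_tangentDisc {s : ℝ} (hs : s ∈ Ioo 0 δ) : (s : ℂ) ∈ tangentDisc δ := by
  rw [mem_tangentDisc, Complex.norm_of_nonneg hs.1.le, Complex.ofReal_re, sq]
  exact mul_lt_mul_of_pos_right hs.2 hs.1

lemma eventually_ofReal_mem_tangentDisc (hδ : 0 < δ) :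
    ∀ᶠ s : ℝ in 𝓝[>] 0, (s : ℂ) ∈ tangentDisc δ :=
  mem_of_superset (Ioo_mem_nhdsGT hδ) fun _ => ofReal_mem_tangentDisc

lemma ofReal_mul_mem_tangentDisc (hz : z ∈ tangentDisc δ) {t : ℝ} (ht : t ∈ Ioc 0 1) :
    (t : ℂ) * z ∈ tangentDisc δ := by
  rw [mem_tangentDisc, norm_mul, Complex.norm_of_nonneg ht.1.le, mul_pow, Complex.re_ofReal_mul]
  calc t ^ 2 * ‖z‖ ^ 2 = t * (t * ‖z‖ ^ 2) := by ring
    _ ≤ t * (1 * ‖z‖ ^ 2) := by have := ht.1.le; have := ht.2; gcongr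
    _ < t * (δ * z.re) := by have := ht.1; rw [one_mul]; gcongr; exact hz
    _ = δ * (t * z.re) := by ring

lemma inv_mem_tangentDisc (hz : 1 < δ * z.re) : z⁻¹ ∈ tangentDisc δ := by
  have hz0 : z ≠ 0 := by rintro rfl; simp at hz; linarith
  rw [mem_tangentDisc, Complex.inv_re, norm_inv, inv_pow, ← Complex.normSq_eq_norm_sq,
    ← mul_div_assoc, inv_eq_one_div]
  have := Complex.normSq_pos.2 hz0
  gcongr

end TangentDisc

section Flat

variable {f : ℂ → ℂ} {δ K : ℝ}

lemma norm_le_mul_norm_of_frequently_eq_zero (hδ : 0 < δ)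
    (hf : DifferentiableOn ℂ f (tangentDisc δ))
    (hK : ∀ w ∈ tangentDisc δ, ‖deriv f w‖ ≤ K) (hzero : ∃ᶠ s : ℝ in 𝓝[>] 0, f s = 0)
    {z : ℂ} (hz : z ∈ tangentDisc δ) : ‖f z‖ ≤ K * ‖z‖ := by
  have hlim : Tendsto (fun s : ℝ => K * ‖z - s‖) (𝓝[>] 0) (𝓝 (K * ‖z‖)) := by
    have : Continuous fun s : ℝ => K * ‖z - s‖ := by fun_prop
    simpa using this.continuousWithinAt (s := Ioi 0) (x := 0) |>.tendsto
  refine ge_of_tendsto_of_frequently hlim ?_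
  refine (hzero.and_eventually (eventually_ofReal_mem_tangentDisc hδ)).mono fun s ⟨hs, hsδ⟩ => ?_
  simpa [hs] using (convex_tangentDisc hδ).norm_image_sub_le_of_norm_deriv_le
    (fun w hw => hf.differentiableAt ((isOpen_tangentDisc hδ).mem_nhds hw)) hK hsδ hz

lemma norm_le_norm_smul_add_of_norm_deriv_le {k : ℕ} (hδ : 0 < δ)
    (hf : DifferentiableOn ℂ f (tangentDisc δ))
    (hK : ∀ w ∈ tangentDisc δ, ‖deriv f w‖ ≤ K * ‖w‖ ^ k) {z : ℂ} (hz : z ∈ tangentDisc δ)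
    {τ : ℝ} (hτ : τ ∈ Ioc 0 1) : ‖f z‖ ≤ ‖f (τ * z)‖ + K * ‖z‖ ^ (k + 1) / (k + 1) := by
  have hK0 : 0 ≤ K * ‖z‖ ^ k := (norm_nonneg _).trans (hK z hz)
  have hmem : ∀ t ∈ Icc τ 1, (t : ℂ) * z ∈ tangentDisc δ := fun t ht =>
    ofReal_mul_mem_tangentDisc hz ⟨hτ.1.trans_le ht.1, ht.2⟩
  have hderiv : ∀ t ∈ Icc τ 1,
      HasDerivAt (fun t : ℝ => f (t * z)) (deriv f (t * z) * z) t := fun t ht => by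
    have hft := (hf.differentiableAt ((isOpen_tangentDisc hδ).mem_nhds (hmem t ht))).hasDerivAt
    exact (hft.comp (t : ℂ) (hasDerivAt_mul_const z)).comp_ofReal
  have hbound (t : ℝ) : HasDerivAt
      (fun t : ℝ => ‖f (τ * z)‖ + K * ‖z‖ ^ (k + 1) / (k + 1) * t ^ (k + 1))
      (K * ‖z‖ ^ (k + 1) * t ^ k) t := by
    refine (((hasDerivAt_pow (k + 1) t).const_mul _).const_add _).congr_deriv ?_
    rw [Nat.add_sub_cancel]
    push_cast
    field_simp
  have key := image_norm_le_of_norm_deriv_right_le_deriv_boundary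
    (fun t ht => (hderiv t ht).continuousAt.continuousWithinAt)
    (fun t ht => (hderiv t ⟨ht.1, ht.2.le⟩).hasDerivWithinAt) ?_ hbound ?_
    (right_mem_Icc.2 hτ.2)
  · simpa using key
  · have : 0 ≤ K * ‖z‖ ^ k * ‖z‖ / (k + 1) * τ ^ (k + 1) := by have := hτ.1; positivity
    rw [pow_succ ‖z‖, ← mul_assoc]
    linarith
  · intro t ht
    have ht0 : 0 ≤ t := hτ.1.le.trans ht.1
    calc ‖deriv f (t * z) * z‖ = ‖deriv f (t * z)‖ * ‖z‖ := norm_mul _ _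
      _ ≤ K * ‖t * z‖ ^ k * ‖z‖ := by gcongr; exact hK _ (hmem t ⟨ht.1, ht.2.le⟩)
      _ = K * ‖z‖ ^ (k + 1) * t ^ k := by rw [norm_mul, Complex.norm_of_nonneg ht0]; ring

lemma norm_le_mul_norm_pow_of_frequently_eq_zero {k : ℕ} (hδ : 0 < δ) (hK0 : 0 ≤ K)
    (hf : DifferentiableOn ℂ f (tangentDisc δ))
    (hK : ∀ w ∈ tangentDisc δ, ‖deriv f w‖ ≤ K * ‖w‖ ^ k) (hzero : ∃ᶠ s : ℝ in 𝓝[>] 0, f s = 0)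
    {z : ℂ} (hz : z ∈ tangentDisc δ) : ‖f z‖ ≤ K * ‖z‖ ^ (k + 1) / (k + 1) := by
  have hlip : ∀ w ∈ tangentDisc δ, ‖f w‖ ≤ K * δ ^ k * ‖w‖ := fun w hw =>
    norm_le_mul_norm_of_frequently_eq_zero hδ hf (fun v hv => (hK v hv).trans <| by
      gcongr; exact (norm_lt_of_mem_tangentDisc hδ hv).le) hzero hw
  have hlim : Tendsto (fun τ : ℝ => K * δ ^ k * ‖τ * z‖ + K * ‖z‖ ^ (k + 1) / (k + 1)) (𝓝[>] 0)
      (𝓝 (K * ‖z‖ ^ (k + 1) / (k + 1))) := by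
    have : Continuous fun τ : ℝ => K * δ ^ k * ‖τ * z‖ + K * ‖z‖ ^ (k + 1) / (k + 1) := by fun_prop
    simpa using this.continuousWithinAt (s := Ioi 0) (x := 0) |>.tendsto
  refine ge_of_tendsto hlim ?_
  filter_upwards [Ioc_mem_nhdsGT zero_lt_one] with τ hτ
  refine (norm_le_norm_smul_add_of_norm_deriv_le hδ hf hK hz hτ).trans ?_
  gcongr
  exact hlip _ (ofReal_mul_mem_tangentDisc hz hτ)

lemma differentiableOn_iteratedDeriv {U : Set ℂ} (hU : IsOpen U) (hf : DifferentiableOn ℂ f U)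
    (m : ℕ) : DifferentiableOn ℂ (iteratedDeriv m f) U := by
  induction m with
  | zero => simpa only [iteratedDeriv_zero] using hf
  | succ m ih => rw [iteratedDeriv_succ]; exact ih.deriv hU

lemma norm_le_mul_norm_pow_div_factorial {n : ℕ} (hδ : 0 < δ)
    (hf : DifferentiableOn ℂ f (tangentDisc δ)) (hK0 : 0 ≤ K)
    (hK : ∀ w ∈ tangentDisc δ, ‖iteratedDeriv n f w‖ ≤ K)
    (hzero : ∀ m, ∃ᶠ s : ℝ in 𝓝[>] 0, iteratedDeriv m f s = 0) {z : ℂ} (hz : z ∈ tangentDisc δ) :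
    ‖f z‖ ≤ K * ‖z‖ ^ n / n.factorial := by
  suffices h : ∀ k ≤ n, ∀ w ∈ tangentDisc δ,
      ‖iteratedDeriv (n - k) f w‖ ≤ K / k.factorial * ‖w‖ ^ k by
    have hfn := h n le_rfl z hz
    rwa [Nat.sub_self, iteratedDeriv_zero, div_mul_eq_mul_div] at hfn
  intro k
  induction k with
  | zero => simpa using hK
  | succ k ih =>
    intro hk w hw
    have hderiv : ∀ v ∈ tangentDisc δ,
        ‖deriv (iteratedDeriv (n - (k + 1)) f) v‖ ≤ K / k.factorial * ‖v‖ ^ k := fun v hv => by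
      rw [← iteratedDeriv_succ, show n - (k + 1) + 1 = n - k by omega]
      exact ih (by omega) v hv
    refine (norm_le_mul_norm_pow_of_frequently_eq_zero hδ (by positivity)
      (differentiableOn_iteratedDeriv (isOpen_tangentDisc hδ) hf _) hderiv (hzero _) hw).trans_eq ?_
    rw [Nat.factorial_succ]
    push_cast
    field_simp

/-- Taylor's bound of order `n ≈ c / ‖z‖`, which is close to the optimal order. -/
lemma exists_norm_le_exp_neg_div_norm {C B : ℝ} (hδ : 0 < δ) (hC : 0 ≤ C) (hB : 0 < B)
    (hf : DifferentiableOn ℂ f (tangentDisc δ))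
    (hCB : ∀ n : ℕ, ∀ w ∈ tangentDisc δ, ‖iteratedDeriv n f w‖ ≤ C * (B * (n : ℝ) ^ 2) ^ n)
    (hzero : ∀ m, ∃ᶠ s : ℝ in 𝓝[>] 0, iteratedDeriv m f s = 0) :
    ∃ C' : ℝ, ∃ c > 0, ∀ z ∈ tangentDisc δ, ‖f z‖ ≤ C' * Real.exp (-c / ‖z‖) := by
  set E := Real.exp 1 with hE
  have hE0 : 0 < E := Real.exp_pos 1
  refine ⟨C * E, 1 / (B * E ^ 2), by positivity, fun z hz => ?_⟩
  have hz0 : 0 < ‖z‖ := (re_pos_of_mem_tangentDisc hδ hz).trans_le (Complex.re_le_norm z)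
  set n : ℕ := ⌊1 / (B * E ^ 2) / ‖z‖⌋₊
  have hn_le : (n : ℝ) ≤ 1 / (B * E ^ 2) / ‖z‖ := Nat.floor_le (by positivity)
  have lt_hn : 1 / (B * E ^ 2) / ‖z‖ < n + 1 := Nat.lt_floor_add_one _
  have hfactorial : (n : ℝ) ^ n / n.factorial ≤ E ^ n := by
    have := Real.pow_div_factorial_le_exp (n : ℝ) (by positivity) n
    rwa [← mul_one (n : ℝ), Real.exp_nat_mul, mul_one] at this
  have hnz : B * n * ‖z‖ * E ≤ E⁻¹ := by
    rw [le_div_iff₀ hz0] at hn_le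
    calc B * n * ‖z‖ * E = B * E * (n * ‖z‖) := by ring
      _ ≤ B * E * (1 / (B * E ^ 2)) := by gcongr
      _ = E⁻¹ := by field_simp
  calc ‖f z‖ ≤ C * (B * (n : ℝ) ^ 2) ^ n * ‖z‖ ^ n / n.factorial :=
        norm_le_mul_norm_pow_div_factorial hδ hf (by positivity) (hCB n) hzero hz
    _ = C * (B * n * ‖z‖) ^ n * ((n : ℝ) ^ n / n.factorial) := by
        rw [mul_pow, mul_pow, mul_pow, ← pow_mul, mul_comm 2 n, pow_mul]; ring
    _ ≤ C * (B * n * ‖z‖) ^ n * E ^ n := by gcongr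
    _ = C * (B * n * ‖z‖ * E) ^ n := by rw [mul_assoc, ← mul_pow]
    _ ≤ C * E⁻¹ ^ n := by gcongr
    _ = C * Real.exp (-n) := by rw [hE, ← Real.exp_neg, ← Real.exp_nat_mul, mul_neg_one]
    _ ≤ C * Real.exp (1 + -(1 / (B * E ^ 2)) / ‖z‖) := by gcongr; rw [neg_div]; linarith
    _ = C * E * Real.exp (-(1 / (B * E ^ 2)) / ‖z‖) := by rw [Real.exp_add, mul_assoc]

end Flat

section PhragmenLindelof

lemma norm_cexp_neg_mul_log_le {u : ℝ} {w : ℂ} (hu : 0 ≤ u) :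
    ‖Complex.exp (-u * ((w + 1) * Complex.log (w + 1)))‖ ≤
      Real.exp (u * Real.pi * ‖w‖ - u * ((w.re + 1) * Real.log ‖w + 1‖)) := by
  have harg : w.im * (w + 1).arg ≤ ‖w‖ * Real.pi := calc
    w.im * (w + 1).arg ≤ |w.im| * |(w + 1).arg| := (le_abs_self _).trans (abs_mul _ _).le
    _ ≤ ‖w‖ * Real.pi := by
      gcongr
      exacts [Complex.abs_im_le_norm w, Complex.abs_arg_le_pi _]
  rw [Complex.norm_exp, Real.exp_le_exp, ← Complex.ofReal_neg, Complex.re_ofReal_mul,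
    Complex.mul_re, Complex.log_re, Complex.log_im, Complex.add_re, Complex.add_im, Complex.one_re,
    Complex.one_im, add_zero]
  linarith [mul_le_mul_of_nonneg_left harg hu]

lemma superpolynomialDecay_exp_of_le_exp_neg_mul_log {h : ℝ → ℝ} {C u : ℝ} (hu : 0 < u)
    (hC : 0 ≤ C) (h0 : ∀ x, 0 ≤ h x)
    (hh : ∀ x, 0 ≤ x → h x ≤ C * Real.exp (-u * ((x + 1) * Real.log (x + 1)))) :
    Asymptotics.SuperpolynomialDecay atTop Real.exp h := by
  intro n
  have hlim : Tendsto (fun x : ℝ => C * Real.exp (-x)) atTop (𝓝 0) := by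
    simpa using Real.tendsto_exp_neg_atTop_nhds_zero.const_mul C
  have hlog : ∀ᶠ x : ℝ in atTop, (n + 1) / u ≤ Real.log (x + 1) :=
    (Real.tendsto_log_atTop.comp (tendsto_atTop_add_const_right _ 1 tendsto_id)).eventually_ge_atTop
      _
  refine squeeze_zero' (.of_forall fun x => mul_nonneg (by positivity) (h0 x)) ?_ hlim
  filter_upwards [hlog, eventually_ge_atTop 0] with x hx hx0
  have hexponent : (x + 1) * (n + 1) ≤ u * ((x + 1) * Real.log (x + 1)) := by
    rw [div_le_iff₀' hu] at hx
    nlinarith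
  calc Real.exp x ^ n * h x
      ≤ Real.exp x ^ n * (C * Real.exp (-u * ((x + 1) * Real.log (x + 1)))) := by
        gcongr; exact hh x hx0
    _ = C * Real.exp (n * x + -u * ((x + 1) * Real.log (x + 1))) := by
        rw [Real.exp_add, Real.exp_nat_mul]; ring
    _ ≤ C * Real.exp (-x) := by gcongr; linarith

/-- The factor `exp (-u (w + 1) log (w + 1))` with `u = c / π` costs at most `exp (c ‖w‖)` on the
half-plane and yields superexponential decay along the positive axis, as Phragmén–Lindelöf needs. -/
lemma eqOn_zero_of_norm_le_exp_neg_norm {F : ℂ → ℂ} {C c : ℝ} (hc : 0 < c)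
    (hF : DiffContOnCl ℂ F {w | 0 < w.re})
    (hC : ∀ w : ℂ, 0 ≤ w.re → ‖F w‖ ≤ C * Real.exp (-c * ‖w‖)) : EqOn F 0 {w | 0 ≤ w.re} := by
  set u : ℝ := c / Real.pi with hu
  have hu0 : 0 < u := by positivity
  have hC0 : 0 ≤ C := by simpa using (norm_nonneg _).trans (hC 0 le_rfl)
  let m : ℂ → ℂ := fun w => Complex.exp (-u * ((w + 1) * Complex.log (w + 1)))
  have hm : DiffContOnCl ℂ m {w | 0 < w.re} := by
    refine DifferentiableOn.diffContOnCl fun w hw => ?_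
    rw [Complex.closure_setOfPred_lt_re] at hw
    have hslit : w + 1 ∈ Complex.slitPlane :=
      .inl (by simpa using add_pos_of_nonneg_of_pos hw one_pos)
    exact DifferentiableAt.differentiableWithinAt (by fun_prop (disch := assumption))
  have hFm : ∀ w : ℂ, 0 ≤ w.re →
      ‖F w * m w‖ ≤ C * Real.exp (-u * ((w.re + 1) * Real.log ‖w + 1‖)) := fun w hw => by
    rw [norm_mul]
    refine (mul_le_mul (hC w hw) (norm_cexp_neg_mul_log_le hu0.le) (norm_nonneg _)
      (by positivity)).trans_eq ?_
    rw [mul_assoc, ← Real.exp_add, hu, div_mul_cancel₀ _ Real.pi_ne_zero]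
    congr 2; ring
  have hFmC : ∀ w : ℂ, 0 ≤ w.re → ‖F w * m w‖ ≤ C := fun w hw => by
    have hnorm : 1 ≤ ‖w + 1‖ := by
      have := Complex.re_le_norm (w + 1)
      rw [Complex.add_re, Complex.one_re] at this
      linarith
    have : 0 ≤ u * ((w.re + 1) * Real.log ‖w + 1‖) := by have := Real.log_nonneg hnorm; positivity
    exact (hFm w hw).trans (mul_le_of_le_one_right hC0 (Real.exp_le_one_iff.2 (by linarith)))
  have hzero : EqOn (fun w => F w * m w) 0 {w | 0 ≤ w.re} := by
    refine PhragmenLindelof.eq_zero_on_right_half_plane_of_superexponential_decay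
      (hF.smul hm) ⟨1, by norm_num, 0, ?_⟩ ?_ ⟨C, fun x => hFmC _ (by simp)⟩
    · refine .of_bound C (mem_inf_of_right fun w hw => ?_)
      simpa using hFmC w (le_of_lt hw)
    · refine superpolynomialDecay_exp_of_le_exp_neg_mul_log hu0 hC0 (fun _ => norm_nonneg _)
        fun x hx => ?_
      have hnorm : ‖(x : ℂ) + 1‖ = x + 1 := by
        rw [← Complex.ofReal_one, ← Complex.ofReal_add, Complex.norm_of_nonneg (by linarith)]
      simpa [hnorm] using hFm x (by simpa using hx)
  intro w hw
  exact (mul_eq_zero.1 (hzero hw)).resolve_right (Complex.exp_ne_zero _)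

lemma eventually_eq_zero_of_norm_le_exp_neg_div_norm {f : ℂ → ℂ} {δ C c : ℝ} (hδ : 0 < δ)
    (hc : 0 < c) (hf : DifferentiableOn ℂ f (tangentDisc δ))
    (hC : ∀ z ∈ tangentDisc δ, ‖f z‖ ≤ C * Real.exp (-c / ‖z‖)) :
    ∀ᶠ s : ℝ in 𝓝[>] 0, f s = 0 := by
  set κ : ℝ := 2 / δ
  have hκ : 0 < κ := by positivity
  have hmem : ∀ w : ℂ, 0 ≤ w.re → (w + κ)⁻¹ ∈ tangentDisc δ := fun w hw => by
    refine inv_mem_tangentDisc ?_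
    rw [Complex.add_re, Complex.ofReal_re, mul_add, mul_div_cancel₀ 2 hδ.ne']
    nlinarith
  have hC0 : 0 ≤ C := nonneg_of_mul_nonneg_left ((norm_nonneg _).trans (hC _ (hmem 0 le_rfl)))
    (Real.exp_pos _)
  have hzero : EqOn (fun w => f (w + κ)⁻¹) 0 {w | 0 ≤ w.re} := by
    refine eqOn_zero_of_norm_le_exp_neg_norm (C := C * Real.exp (c * κ)) hc
      (DifferentiableOn.diffContOnCl fun w hw => ?_) fun w hw => ?_
    · rw [Complex.closure_setOfPred_lt_re] at hw
      have hne : w + κ ≠ 0 := fun h => by simpa [h] using re_pos_of_mem_tangentDisc hδ (hmem w hw)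
      have hfw := hf.differentiableAt ((isOpen_tangentDisc hδ).mem_nhds (hmem w hw))
      exact (hfw.comp w (by fun_prop (disch := assumption))).differentiableWithinAt
    · calc ‖f (w + κ)⁻¹‖ ≤ C * Real.exp (-c * ‖w + κ‖) := by
            simpa [div_inv_eq_mul] using hC _ (hmem w hw)
        _ ≤ C * Real.exp (c * κ + -c * ‖w‖) := by
            have htri : ‖w‖ ≤ ‖w + κ‖ + κ := by
              simpa [abs_of_pos hκ] using norm_le_norm_add_norm_sub' w (w + κ)
            gcongr
            nlinarith
        _ = C * Real.exp (c * κ) * Real.exp (-c * ‖w‖) := by rw [Real.exp_add, mul_assoc]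
  filter_upwards [Ioo_mem_nhdsGT (inv_pos.2 hκ)] with s hs
  have hsκ : κ ≤ s⁻¹ := (le_inv_comm₀ hκ hs.1).2 hs.2.le
  simpa using hzero (show ((s⁻¹ - κ : ℝ) : ℂ) ∈ {w : ℂ | 0 ≤ w.re} by simpa using hsκ)

end PhragmenLindelof

section Rolle

variable {f : ℂ → ℂ} {δ : ℝ}

lemma im_deriv_eq_zero {s : ℝ} (hf : DifferentiableAt ℂ f s) (him : ∀ᶠ x : ℝ in 𝓝 s, (f x).im = 0) :
    (deriv f s).im = 0 := by
  have hderiv := (hf.hasDerivAt.const_mul (-Complex.I)).real_of_complex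
  have hzero : (fun x : ℝ => (-Complex.I * f x).re) =ᶠ[𝓝 s] fun _ => 0 :=
    him.mono fun x hx => by simpa using hx
  simpa using hderiv.unique ((hasDerivAt_const s (0 : ℝ)).congr_of_eventuallyEq hzero)

lemma eventually_im_deriv_eq_zero (hδ : 0 < δ) (hf : DifferentiableOn ℂ f (tangentDisc δ))
    (him : ∀ᶠ s : ℝ in 𝓝[>] 0, (f s).im = 0) : ∀ᶠ s : ℝ in 𝓝[>] 0, (deriv f s).im = 0 := by
  filter_upwards [eventually_eventually_nhdsWithin.2 him, self_mem_nhdsWithin,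
    eventually_ofReal_mem_tangentDisc hδ] with s hs hs0 hsδ
  rw [isOpen_Ioi.nhdsWithin_eq hs0] at hs
  exact im_deriv_eq_zero (hf.differentiableAt ((isOpen_tangentDisc hδ).mem_nhds hsδ)) hs

lemma frequently_deriv_eq_zero (hδ : 0 < δ) (hf : DifferentiableOn ℂ f (tangentDisc δ))
    (him : ∀ᶠ s : ℝ in 𝓝[>] 0, (f s).im = 0) (hzero : ∃ᶠ s : ℝ in 𝓝[>] 0, f s = 0) :
    ∃ᶠ s : ℝ in 𝓝[>] 0, deriv f s = 0 := by
  have hzero' := (nhdsGT_basis (0 : ℝ)).frequently_iff.1 hzero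
  refine ((nhdsGT_basis (0 : ℝ)).frequently_iff.2 fun η hη => ?_ :
    ∃ᶠ s : ℝ in 𝓝[>] 0, s < δ → (deriv f s).re = 0).and_eventually
      ((eventually_im_deriv_eq_zero hδ hf him).and (Ioo_mem_nhdsGT hδ)) |>.mono
        fun s hs => Complex.ext (hs.1 hs.2.2.2) hs.2.1
  obtain ⟨s₂, hs₂, hfs₂⟩ := hzero' _ (lt_min hη hδ)
  obtain ⟨s₁, hs₁, hfs₁⟩ := hzero' _ hs₂.1
  have hderiv : ∀ x ∈ Icc s₁ s₂, HasDerivAt (fun x : ℝ => (f x).re) (deriv f x).re x :=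
    fun x hx => by
      have hxδ := ofReal_mem_tangentDisc (δ := δ)
        ⟨hs₁.1.trans_le hx.1, hx.2.trans_lt (hs₂.2.trans_le (min_le_right _ _))⟩
      exact (hf.differentiableAt
        ((isOpen_tangentDisc hδ).mem_nhds hxδ)).hasDerivAt.real_of_complex
  obtain ⟨x, hx, hx0⟩ := exists_hasDerivAt_eq_zero hs₁.2
    (fun x hx => (hderiv x hx).continuousAt.continuousWithinAt) (by rw [hfs₁, hfs₂])
    fun x hx => hderiv x (Ioo_subset_Icc_self hx)
  exact ⟨x, ⟨hs₁.1.trans hx.1, hx.2.trans (hs₂.2.trans_le (min_le_left _ _))⟩, fun _ => hx0⟩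

lemma frequently_iteratedDeriv_eq_zero (hδ : 0 < δ) (hf : DifferentiableOn ℂ f (tangentDisc δ))
    (him : ∀ᶠ s : ℝ in 𝓝[>] 0, (f s).im = 0) (hzero : ∃ᶠ s : ℝ in 𝓝[>] 0, f s = 0) (m : ℕ) :
    ∃ᶠ s : ℝ in 𝓝[>] 0, iteratedDeriv m f s = 0 := by
  suffices h : (∀ᶠ s : ℝ in 𝓝[>] 0, (iteratedDeriv m f s).im = 0) ∧
    ∃ᶠ s : ℝ in 𝓝[>] 0, iteratedDeriv m f s = 0 from h.2
  induction m with
  | zero => simpa only [iteratedDeriv_zero] using ⟨him, hzero⟩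
  | succ m ih =>
    have hm := differentiableOn_iteratedDeriv (isOpen_tangentDisc hδ) hf m
    rw [iteratedDeriv_succ]
    exact ⟨eventually_im_deriv_eq_zero hδ hm ih.1, frequently_deriv_eq_zero hδ hm ih.1 ih.2⟩

end Rolle

section TangentDiscEstimates

variable {d : ℂ → ℂ}

lemma eventually_closedBall_subset_of_mem_tangentDisc {s : Set ℂ} (hs : s ∈ 𝓝 (0 : ℂ)) :
    ∀ᶠ δ in 𝓝[>] (0 : ℝ), ∀ z ∈ tangentDisc δ, Metric.closedBall z δ ⊆ s := by
  obtain ⟨r, hr, hrs⟩ := Metric.mem_nhds_iff.1 hs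
  filter_upwards [Ioo_mem_nhdsGT (half_pos hr)] with δ hδ z hz w hw
  have hzδ := norm_lt_of_mem_tangentDisc hδ.1 hz
  have hwz := norm_le_norm_add_norm_sub' w z
  rw [mem_closedBall_iff_norm] at hw
  exact hrs (mem_ball_zero_iff.2 (by linarith [hδ.2]))

lemma exists_eventually_norm_sub_le_on_tangentDisc (hd : AnalyticAt ℂ d 0) :
    ∃ D ≥ 0, ∀ᶠ δ in 𝓝[>] (0 : ℝ), ∀ z ∈ tangentDisc δ,
      DifferentiableOn ℂ d (Metric.closedBall z δ) ∧
        ∀ w ∈ Metric.closedBall z δ, ‖d w - d z‖ ≤ D * ‖w - z‖ := by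
  obtain ⟨D, s, hs, hDs⟩ := hd.hasStrictDerivAt.hasStrictFDerivAt.exists_lipschitzOnWith
  refine ⟨D, D.2, ?_⟩
  filter_upwards [eventually_closedBall_subset_of_mem_tangentDisc
    (inter_mem hs hd.eventually_analyticAt), self_mem_nhdsWithin] with δ hδ hδ0 z hz
  refine ⟨fun w hw => (hδ z hz hw).2.differentiableAt.differentiableWithinAt, fun w hw => ?_⟩
  exact hDs.norm_sub_le (hδ z hz hw).1 (hδ z hz (Metric.mem_closedBall_self (le_of_lt hδ0))).1

lemma exists_eventually_norm_le_mul_norm_sq (hd : AnalyticAt ℂ d 0) (hd0 : d 0 = 0) :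
    ∃ K ≥ 0, ∀ᶠ z in 𝓝 0, ‖d z - deriv d 0 * z‖ ≤ K * ‖z‖ ^ 2 := by
  obtain ⟨q, hq⟩ := hd
  set h := dslope (dslope d 0) 0
  have hh : ContinuousAt h 0 :=
    hq.has_fpower_series_dslope_fslope.has_fpower_series_dslope_fslope.analyticAt.continuousAt
  refine ⟨‖h 0‖ + 1, by positivity, ?_⟩
  filter_upwards [hh.norm.eventually_le_const (lt_add_one _)] with z hz
  have hexpand : d z - deriv d 0 * z = h z * z ^ 2 := by
    have h₁ := sub_smul_dslope d 0 z
    have h₂ := sub_smul_dslope (dslope d 0) 0 z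
    simp only [dslope_same, sub_zero, smul_eq_mul, hd0] at h₁ h₂
    rw [← h₁, eq_add_of_sub_eq' h₂.symm]
    ring
  rw [hexpand, norm_mul, norm_pow]
  gcongr

lemma exists_eventually_re_le_mul_re_on_tangentDisc (hd : AnalyticAt ℂ d 0) (hd0 : d 0 = 0)
    (him : ∀ᶠ x : ℝ in 𝓝 0, (d x).im = 0) :
    ∃ M, ∀ᶠ δ in 𝓝[>] (0 : ℝ), ∀ z ∈ tangentDisc δ, (d z).re ≤ M * z.re := by
  obtain ⟨K, hK0, hK⟩ := exists_eventually_norm_le_mul_norm_sq hd hd0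
  have hderiv : (deriv d 0).im = 0 := by
    simpa using im_deriv_eq_zero (s := 0) (by simpa using hd.differentiableAt) him
  refine ⟨(deriv d 0).re + K, ?_⟩
  filter_upwards [eventually_closedBall_subset_of_mem_tangentDisc hK, Ioo_mem_nhdsGT one_pos]
    with δ hδ hδ1 z hz
  have hre : 0 < z.re := re_pos_of_mem_tangentDisc hδ1.1 hz
  have hlin : (d z - deriv d 0 * z).re = (d z).re - (deriv d 0).re * z.re := by
    simp [hderiv]
  have hsq : ‖z‖ ^ 2 ≤ z.re := (mem_tangentDisc.1 hz).le.trans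
    (mul_le_of_le_one_left hre.le hδ1.2.le)
  have hquad : (d z - deriv d 0 * z).re ≤ K * z.re := (Complex.re_le_norm _).trans <|
    (hδ z hz (Metric.mem_closedBall_self hδ1.1.le)).trans (by gcongr)
  linarith

lemma exists_gaussKernel_bounds_on_tangentDisc {a : ℝ} (ha : 0 < a) (hd : AnalyticAt ℂ d 0)
    (hd0 : d 0 = 0) (him : ∀ᶠ x : ℝ in 𝓝 0, (d x).im = 0) :
    ∃ δ > 0, ∃ A > 0, ∃ C > 0, ∃ B > 0, DifferentiableOn ℂ d (tangentDisc δ) ∧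
      ∀ z ∈ tangentDisc δ, ∀ θ ≥ a, ‖gaussKernel d θ z‖ ≤ A ∧ ∀ n : ℕ,
        ‖iteratedDeriv n (gaussKernel d θ) z - (-((θ ^ 2 / 2 : ℝ) : ℂ)) ^ n * gaussKernel d θ z‖ ≤
          1 / 2 * ((θ ^ 2 / 2) ^ n * ‖gaussKernel d θ z‖) + C * (B * (n : ℝ) ^ 2) ^ n := by
  obtain ⟨D, hD0, hD⟩ := exists_eventually_norm_sub_le_on_tangentDisc hd
  obtain ⟨M, hM⟩ := exists_eventually_re_le_mul_re_on_tangentDisc hd hd0 him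
  obtain ⟨δ, hδD, hδM, hδ⟩ := (hD.and (hM.and self_mem_nhdsWithin)).exists
  obtain ⟨C, hC, B, hB, hCB⟩ := exists_norm_iteratedDeriv_gaussKernel_sub_le hδ ha hD0
    (fun z hz => (hδD z hz).1) fun z hz => (hδD z hz).2
  have hA : ∀ z ∈ tangentDisc δ, ∀ θ ≥ a, ‖gaussKernel d θ z‖ ≤ Real.exp (δ * (M ^ 2 / 2)) :=
    fun z hz θ hθ => by
      refine (norm_gaussKernel_le (ha.le.trans hθ) (re_pos_of_mem_tangentDisc hδ hz).le
        (hδM z hz)).trans ?_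
      gcongr
      exact (Complex.re_le_norm z).trans (norm_lt_of_mem_tangentDisc hδ hz).le
  refine ⟨δ, hδ, Real.exp (δ * (M ^ 2 / 2)), Real.exp_pos _, Real.exp (δ * (M ^ 2 / 2)) * C,
    by positivity, B, hB, fun z hz => ?_, fun z hz θ hθ => ⟨hA z hz θ hθ, fun n => ?_⟩⟩
  · exact ((hδD z hz).1.differentiableAt
      (Metric.closedBall_mem_nhds z hδ)).differentiableWithinAt
  · refine (hCB z hz θ hθ n).trans ?_
    rw [mul_add, mul_assoc (Real.exp _)]
    refine add_le_add (le_of_eq (by ring)) ?_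
    gcongr
    exact hA z hz θ hθ

end TangentDiscEstimates

/-! ### Moments of a measure whose Gaussian transform equals one near the origin -/

lemma integrable_and_integral_le_of_integral_eq_zero {α : Type*} [MeasurableSpace α]
    {p : Measure α} [IsFiniteMeasure p] {f : α → ℂ} {v : α → ℝ} {ζ : ℂ} {K : ℝ} (hζ : ‖ζ‖ = 1)
    (hf : Integrable f p) (hf0 : ∫ x, f x ∂p = 0) (hv : AEStronglyMeasurable v p)
    (hv0 : ∀ x, 0 ≤ v x) (hK : ∀ᵐ x ∂p, ‖f x - ζ * v x‖ ≤ 1 / 2 * v x + K) :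
    Integrable v p ∧ ∫ x, v x ∂p ≤ 2 * K * p.real univ := by
  have hnorm (x : α) : ‖ζ * v x‖ = v x := by
    rw [norm_mul, hζ, one_mul, Complex.norm_of_nonneg (hv0 x)]
  have hvint : Integrable v p := by
    refine .mono' ((hf.norm.add (integrable_const K)).const_mul 2) hv ?_
    filter_upwards [hK] with x hx
    have htri := norm_sub_norm_le (ζ * v x) (f x)
    rw [norm_sub_rev, hnorm] at htri
    rw [Real.norm_of_nonneg (hv0 x), Pi.add_apply]
    linarith
  refine ⟨hvint, ?_⟩
  have hint : ∫ x, (f x - ζ * v x) ∂p = -(ζ * (∫ x, v x ∂p : ℝ)) := by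
    have hζv : Integrable (fun x => ζ * (v x : ℂ)) p := hvint.ofReal.const_mul ζ
    rw [integral_sub hf hζv, hf0, zero_sub, integral_const_mul,
      integral_complex_ofReal]
  have hle := norm_integral_le_of_norm_le (g := fun x => 1 / 2 * v x + K)
    ((hvint.const_mul _).add (integrable_const K)) hK
  rw [hint, norm_neg, norm_mul, hζ, one_mul, Complex.norm_of_nonneg (integral_nonneg hv0),
    integral_add (hvint.const_mul _) (integrable_const K), integral_const_mul, integral_const,
    smul_eq_mul] at hle
  linarith

lemma lintegral_le_of_frequently_lintegral_le {ι α : Type*} [MeasurableSpace α] {p : Measure α}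
    {l : Filter ι} [l.IsCountablyGenerated] {F : ι → α → ℝ≥0∞} {f : α → ℝ≥0∞} {C : ℝ≥0∞}
    (hF : ∀ i, Measurable (F i)) (hlim : ∀ x, Tendsto (F · x) l (𝓝 (f x)))
    (hC : ∃ᶠ i in l, ∫⁻ x, F i x ∂p ≤ C) : ∫⁻ x, f x ∂p ≤ C := by
  obtain ⟨u, hu, huC⟩ := exists_seq_forall_of_frequently hC
  calc ∫⁻ x, f x ∂p = ∫⁻ x, liminf (fun n => F (u n) x) atTop ∂p :=
        lintegral_congr fun x => ((hlim x).comp hu).liminf_eq.symm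
    _ ≤ liminf (fun n => ∫⁻ x, F (u n) x ∂p) atTop := lintegral_liminf_le fun n => hF (u n)
    _ ≤ C := liminf_le_of_frequently_le' (.of_forall huC)

section Moments

variable {p : Measure ℝ} [IsFiniteMeasure p] {d : ℂ → ℂ} {n : ℕ}

lemma lintegral_sq_pow_mul_norm_gaussKernel_le {U : Set ℂ} {s K : ℝ} (hU : IsOpen U)
    (hp : HolomorphicFamily p U fun z θ => gaussKernel d θ z) (hs : (s : ℂ) ∈ U)
    (hds : (d s).im = 0) (hzero : ∫ θ, iteratedDeriv n (gaussKernel d θ) s ∂p = 0)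
    (hK : ∀ᵐ θ ∂p, ‖iteratedDeriv n (gaussKernel d θ) s -
      (-((θ ^ 2 / 2 : ℝ) : ℂ)) ^ n * gaussKernel d θ s‖ ≤
        1 / 2 * ((θ ^ 2 / 2) ^ n * ‖gaussKernel d θ s‖) + K) :
    ∫⁻ θ, ENNReal.ofReal ((θ ^ 2 / 2) ^ n * ‖gaussKernel d θ s‖) ∂p ≤
      ENNReal.ofReal (2 * K * p.real univ) := by
  have hnonneg (θ : ℝ) : 0 ≤ (θ ^ 2 / 2) ^ n * ‖gaussKernel d θ s‖ := by positivity
  have hsign (θ : ℝ) : (-((θ ^ 2 / 2 : ℝ) : ℂ)) ^ n * gaussKernel d θ s =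
      (-1) ^ n * ((θ ^ 2 / 2) ^ n * ‖gaussKernel d θ s‖ : ℝ) := by
    rw [gaussKernel_eq_ofReal_norm (Complex.ofReal_im s) hds, Complex.norm_real, norm_norm, neg_pow]
    push_cast
    ring
  have hmeas : Continuous fun θ : ℝ => (θ ^ 2 / 2) ^ n * ‖gaussKernel d θ s‖ :=
    Continuous.mul (by fun_prop) continuous_gaussKernel.norm
  simp only [hsign] at hK
  obtain ⟨hint, hle⟩ := integrable_and_integral_le_of_integral_eq_zero (by simp)
    ((hp.iteratedDeriv hU n).integrable hs) hzero hmeas.aestronglyMeasurable hnonneg hK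
  rw [← ofReal_integral_eq_lintegral_ofReal hint (.of_forall hnonneg)]
  exact ENNReal.ofReal_le_ofReal hle

omit [IsFiniteMeasure p] in
lemma integrable_sq_pow_and_integral_le {C : ℝ} (hC : 0 ≤ C) (hd : ContinuousAt d 0)
    (hd0 : d 0 = 0) (hbound : ∃ᶠ s : ℝ in 𝓝[>] 0,
      ∫⁻ θ, ENNReal.ofReal ((θ ^ 2 / 2) ^ n * ‖gaussKernel d θ s‖) ∂p ≤ ENNReal.ofReal C) :
    Integrable (fun θ : ℝ => (θ ^ 2 / 2) ^ n) p ∧ ∫ θ, (θ ^ 2 / 2) ^ n ∂p ≤ C := by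
  have hle : ∫⁻ θ, ENNReal.ofReal ((θ ^ 2 / 2) ^ n) ∂p ≤ ENNReal.ofReal C := by
    refine lintegral_le_of_frequently_lintegral_le (fun s => ?_) (fun θ => ?_) hbound
    · have : Continuous fun θ : ℝ => ‖gaussKernel d θ s‖ := continuous_gaussKernel.norm
      fun_prop
    · have hcont : ContinuousAt (fun s : ℝ => (θ ^ 2 / 2) ^ n * ‖gaussKernel d θ s‖) 0 :=
        ((continuousAt_gaussKernel (by simpa using hd)).comp
          Complex.continuous_ofReal.continuousAt).norm.const_mul _
      refine ENNReal.tendsto_ofReal ?_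
      simpa [gaussKernel, hd0] using hcont.tendsto.mono_left nhdsWithin_le_nhds
  have hnonneg : ∀ᵐ θ : ℝ ∂p, 0 ≤ (θ ^ 2 / 2) ^ n := .of_forall fun θ => by positivity
  have hint : Integrable (fun θ : ℝ => (θ ^ 2 / 2) ^ n) p := by
    refine ⟨Continuous.aestronglyMeasurable (by fun_prop), ?_⟩
    rw [hasFiniteIntegral_iff_ofReal hnonneg]
    exact hle.trans_lt ENNReal.ofReal_lt_top
  refine ⟨hint, ?_⟩
  rw [← ofReal_integral_eq_lintegral_ofReal hint hnonneg] at hle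
  exact (ENNReal.ofReal_le_ofReal_iff hC).1 hle

lemma norm_integral_iteratedDeriv_gaussKernel_le {A K m : ℝ} {z : ℂ} (hA0 : 0 ≤ A)
    (hint : Integrable (fun θ : ℝ => (θ ^ 2 / 2) ^ n) p) (hm : ∫ θ, (θ ^ 2 / 2) ^ n ∂p ≤ m)
    (hA : ∀ᵐ θ ∂p, ‖gaussKernel d θ z‖ ≤ A)
    (hK : ∀ᵐ θ ∂p, ‖iteratedDeriv n (gaussKernel d θ) z -
      (-((θ ^ 2 / 2 : ℝ) : ℂ)) ^ n * gaussKernel d θ z‖ ≤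
        1 / 2 * ((θ ^ 2 / 2) ^ n * ‖gaussKernel d θ z‖) + K) :
    ‖∫ θ, iteratedDeriv n (gaussKernel d θ) z ∂p‖ ≤ 3 / 2 * A * m + K * p.real univ := by
  have hle := norm_integral_le_of_norm_le (μ := p)
    (f := fun θ => iteratedDeriv n (gaussKernel d θ) z)
    (g := fun θ => 3 / 2 * A * (θ ^ 2 / 2) ^ n + K)
    ((hint.const_mul _).add (integrable_const K)) <| by
      filter_upwards [hA, hK] with θ hθA hθK
      have htri := norm_sub_norm_le (iteratedDeriv n (gaussKernel d θ) z)
        ((-((θ ^ 2 / 2 : ℝ) : ℂ)) ^ n * gaussKernel d θ z)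
      rw [norm_mul, norm_pow, norm_neg, Complex.norm_of_nonneg (by positivity)] at htri
      have hmul : (θ ^ 2 / 2) ^ n * ‖gaussKernel d θ z‖ ≤ (θ ^ 2 / 2) ^ n * A := by gcongr
      linarith
  rw [integral_add (hint.const_mul _) (integrable_const K), integral_const_mul, integral_const,
    smul_eq_mul, mul_comm (p.real univ)] at hle
  refine hle.trans ?_
  gcongr

lemma frequently_iteratedDeriv_integral_gaussKernel_sub_one_eq_zero {δ : ℝ} (hδ : 0 < δ)
    (hp : HolomorphicFamily p (tangentDisc δ) fun z θ => gaussKernel d θ z)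
    (him : ∀ᶠ s : ℝ in 𝓝 0, (d s).im = 0)
    (hone : ∃ᶠ s : ℝ in 𝓝[>] 0, ∫ θ, gaussKernel d θ s ∂p = 1) (n : ℕ) :
    ∃ᶠ s : ℝ in 𝓝[>] 0, iteratedDeriv n (fun z => ∫ θ, gaussKernel d θ z ∂p - 1) s = 0 := by
  refine frequently_iteratedDeriv_eq_zero hδ
    ((hp.differentiableOn_integral (isOpen_tangentDisc hδ)).sub_const 1) ?_ ?_ n
  · filter_upwards [him.filter_mono nhdsWithin_le_nhds] with s hs
    rw [integral_gaussKernel_eq_ofReal (Complex.ofReal_im s) hs]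
    simp
  · exact hone.mono fun s hs => by rw [hs, sub_self]

end Moments

section LocalIdentity

variable {p : Measure ℝ} [IsFiniteMeasure p] {d : ℂ → ℂ} {δ a A B C : ℝ}

lemma norm_iteratedDeriv_integral_gaussKernel_sub_one_le (hδ : 0 < δ) (hA0 : 0 < A) (hC0 : 0 < C)
    (hB0 : 0 < B) (hp : HolomorphicFamily p (tangentDisc δ) fun z θ => gaussKernel d θ z)
    (hbounds : ∀ᵐ θ ∂p, ∀ z ∈ tangentDisc δ, ‖gaussKernel d θ z‖ ≤ A ∧ ∀ n : ℕ,
      ‖iteratedDeriv n (gaussKernel d θ) z - (-((θ ^ 2 / 2 : ℝ) : ℂ)) ^ n * gaussKernel d θ z‖ ≤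
        1 / 2 * ((θ ^ 2 / 2) ^ n * ‖gaussKernel d θ z‖) + C * (B * (n : ℝ) ^ 2) ^ n)
    (hd : ContinuousAt d 0) (hd0 : d 0 = 0) (him : ∀ᶠ s : ℝ in 𝓝 0, (d s).im = 0)
    (hone : ∃ᶠ s : ℝ in 𝓝[>] 0, ∫ θ, gaussKernel d θ s ∂p = 1) {z : ℂ}
    (hz : z ∈ tangentDisc δ) (n : ℕ) :
    ‖iteratedDeriv n (fun z => ∫ θ, gaussKernel d θ z ∂p - 1) z‖ ≤
      (A * p.real univ + 1 + 3 * A * C * p.real univ + C * p.real univ) *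
        (B * (n : ℝ) ^ 2) ^ n := by
  have hU := isOpen_tangentDisc hδ
  have : 0 ≤ p.real univ := measureReal_nonneg
  have hAz : ∀ᵐ θ ∂p, ‖gaussKernel d θ z‖ ≤ A := hbounds.mono fun θ hθ => (hθ z hz).1
  rcases eq_or_ne n 0 with rfl | hn
  · have hnorm : ‖∫ θ, gaussKernel d θ z ∂p‖ ≤ A * p.real univ :=
      norm_integral_le_of_norm_le_const hAz
    have htri := norm_sub_le (∫ θ, gaussKernel d θ z ∂p) 1
    have hrest : 0 ≤ 3 * A * C * p.real univ + C * p.real univ := by positivity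
    rw [norm_one] at htri
    simp only [iteratedDeriv_zero, pow_zero, mul_one]
    linarith
  set T : ℝ := (B * (n : ℝ) ^ 2) ^ n with hT
  have hderiv : ∀ w ∈ tangentDisc δ,
      iteratedDeriv n (fun z => ∫ θ, gaussKernel d θ z ∂p - 1) w =
        ∫ θ, iteratedDeriv n (gaussKernel d θ) w ∂p := fun w hw => by
    obtain ⟨m, rfl⟩ := Nat.exists_eq_succ_of_ne_zero hn
    rw [← hp.iteratedDeriv_integral hU _ hw, iteratedDeriv_succ', iteratedDeriv_succ']
    simp only [deriv_sub_const_fun]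
  have hzeros := frequently_iteratedDeriv_integral_gaussKernel_sub_one_eq_zero hδ hp him hone n
  obtain ⟨hint, hmoment⟩ := integrable_sq_pow_and_integral_le
    (C := 2 * (C * T) * p.real univ) (by positivity) hd hd0 <|
      (hzeros.and_eventually ((eventually_ofReal_mem_tangentDisc hδ).and
        (him.filter_mono nhdsWithin_le_nhds))).mono fun s ⟨hs, hsδ, hds⟩ =>
          lintegral_sq_pow_mul_norm_gaussKernel_le hU hp hsδ hds (by rw [← hderiv s hsδ, hs])
            (hbounds.mono fun θ hθ => (hθ s hsδ).2 n)
  rw [hderiv z hz]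
  refine (norm_integral_iteratedDeriv_gaussKernel_le hA0.le hint hmoment hAz
    (hbounds.mono fun θ hθ => (hθ z hz).2 n)).trans ?_
  have hrest : 0 ≤ (A * p.real univ + 1) * T := by positivity
  linarith

/-- A quasi-analyticity phenomenon: by Rolle every derivative of `∫ gaussKernel d θ · ∂p - 1` has
zeros accumulating at `0`, which bounds the moments of `p` and makes this function exponentially
flat at `0`. -/
theorem eventually_integral_gaussKernel_eq_one (ha : 0 < a) (hpa : ∀ᵐ θ ∂p, a ≤ θ)
    (hd : AnalyticAt ℂ d 0) (hd0 : d 0 = 0) (him : ∀ᶠ s : ℝ in 𝓝 0, (d s).im = 0)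
    (hone : ∃ᶠ s : ℝ in 𝓝[>] 0, ∫ θ, gaussKernel d θ s ∂p = 1) :
    ∀ᶠ s : ℝ in 𝓝[>] 0, ∫ θ, gaussKernel d θ s ∂p = 1 := by
  obtain ⟨δ, hδ, A, hA, C, hC, B, hB, hdδ, hbounds⟩ :=
    exists_gaussKernel_bounds_on_tangentDisc ha hd hd0 him
  have hU := isOpen_tangentDisc hδ
  have hbounds' := hpa.mono fun θ hθ z hz => hbounds z hz θ hθ
  have hp : HolomorphicFamily p (tangentDisc δ) fun z θ => gaussKernel d θ z :=
    holomorphicFamily_gaussKernel hU hdδ (hbounds'.mono fun θ hθ z hz => (hθ z hz).1)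
  have hf := (hp.differentiableOn_integral hU).sub_const 1
  obtain ⟨C', c, hc, hflat⟩ := exists_norm_le_exp_neg_div_norm hδ (by positivity) hB hf
    (fun n z hz => norm_iteratedDeriv_integral_gaussKernel_sub_one_le hδ hA hC hB hp hbounds'
      hd.continuousAt hd0 him hone hz n)
    (frequently_iteratedDeriv_integral_gaussKernel_sub_one_eq_zero hδ hp him hone)
  exact (eventually_eq_zero_of_norm_le_exp_neg_div_norm hδ hc hf hflat).mono
    fun s hs => sub_eq_zero.1 hs

end LocalIdentity

/-! ### Analytic continuation of the identity -/

section GlobalIdentity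

variable {ν : Measure ℝ} {c : ℝ → ℝ} {s : ℝ}

lemma norm_gaussKernel_le_of_re_le {C : ℂ → ℂ} {z : ℂ} {θ K : ℝ} (hθ : 0 ≤ θ) (hs : 0 < s)
    (hz : s ≤ z.re) (hK : (C z).re ≤ K) :
    ‖gaussKernel C θ z‖ ≤ Real.exp (K ^ 2 / (2 * s)) := by
  rw [norm_gaussKernel, Real.exp_le_exp]
  calc -(θ ^ 2 / 2) * z.re + θ * (C z).re ≤ -(θ ^ 2 / 2 * s) + θ * K := by
        rw [neg_mul]; gcongr
    _ = K ^ 2 / (2 * s) - (θ * s - K) ^ 2 / (2 * s) := by field_simp; ring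
    _ ≤ K ^ 2 / (2 * s) := sub_le_self _ (by positivity)

lemma eventually_integral_exp_eq_re {C : ℂ → ℂ} (hC : ∀ᶠ x : ℝ in 𝓝 s, C x = c x) :
    ∀ᶠ x : ℝ in 𝓝 s, ∫ θ, Real.exp (-(θ ^ 2 / 2) * x + θ * c x) ∂ν =
      (∫ θ, gaussKernel C θ x ∂ν).re := by
  filter_upwards [hC] with x hx
  rw [integral_gaussKernel_eq_ofReal (Complex.ofReal_im x) (by rw [hx]; exact Complex.ofReal_im _),
    Complex.ofReal_re]
  simp only [norm_gaussKernel, hx, Complex.ofReal_re]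

lemma analyticAt_integral_exp [IsFiniteMeasure ν] (hν : ∀ᵐ θ ∂ν, 0 ≤ θ) (hs : 0 < s)
    (hc : AnalyticAt ℝ c s) :
    AnalyticAt ℝ (fun s => ∫ θ, Real.exp (-(θ ^ 2 / 2) * s + θ * c s) ∂ν) s := by
  obtain ⟨C, hC, hCc⟩ := exists_complex_extension_of_analyticAt hc
  have hre : ∀ᶠ z : ℂ in 𝓝 s, s / 2 < z.re :=
    Complex.continuous_re.continuousAt.eventually_const_lt (by simpa using hs)
  have hCK : ∀ᶠ z : ℂ in 𝓝 s, (C z).re < (C s).re + 1 :=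
    (Complex.continuous_re.continuousAt.comp hC.continuousAt).eventually_lt_const (lt_add_one _)
  obtain ⟨ρ, hρ, hball⟩ := Metric.eventually_nhds_iff_ball.1
    (hC.eventually_analyticAt.and (hre.and hCK))
  have hfam : HolomorphicFamily ν (Metric.ball (s : ℂ) ρ) fun z θ => gaussKernel C θ z :=
    holomorphicFamily_gaussKernel Metric.isOpen_ball
      (fun z hz => (hball z hz).1.differentiableAt.differentiableWithinAt) <|
      hν.mono fun θ hθ z hz =>
        norm_gaussKernel_le_of_re_le hθ (half_pos hs) (hball z hz).2.1.le (hball z hz).2.2.le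
  have hanalytic : AnalyticAt ℂ (fun z => ∫ θ, gaussKernel C θ z ∂ν) s :=
    (hfam.differentiableOn_integral Metric.isOpen_ball).analyticAt (Metric.ball_mem_nhds _ hρ)
  refine AnalyticAt.congr ?_ ((eventually_integral_exp_eq_re hCc).mono fun _ => Eq.symm)
  exact (Complex.reCLM.analyticAt _).comp
    ((hanalytic.restrictScalars (𝕜 := ℝ)).comp (Complex.ofRealCLM.analyticAt s))

lemma lintegral_ofReal_eq_one_iff {α : Type*} [MeasurableSpace α] {μ : Measure α} {f : α → ℝ}
    (hf : 0 ≤ᵐ[μ] f) (hfm : AEStronglyMeasurable f μ) :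
    ∫⁻ x, ENNReal.ofReal (f x) ∂μ = 1 ↔ ∫ x, f x ∂μ = 1 := by
  rw [integral_eq_lintegral_of_nonneg_ae hf hfm, ENNReal.toReal_eq_one_iff]

lemma lintegral_exp_eq_one_iff {u v : ℝ} :
    ∫⁻ θ, ENNReal.ofReal (Real.exp (-(θ ^ 2 / 2) * u + θ * v)) ∂ν = 1 ↔
      ∫ θ, Real.exp (-(θ ^ 2 / 2) * u + θ * v) ∂ν = 1 :=
  lintegral_ofReal_eq_one_iff (.of_forall fun _ => (Real.exp_pos _).le)
    (Continuous.aestronglyMeasurable (by fun_prop))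

lemma lintegral_exp_mul_le_one_of_frequently (hc : ContinuousAt c 0)
    (hone : ∃ᶠ s in 𝓝[>] 0, ∫ θ, Real.exp (-(θ ^ 2 / 2) * s + θ * c s) ∂ν = 1) :
    ∫⁻ θ, ENNReal.ofReal (Real.exp (θ * c 0)) ∂ν ≤ 1 := by
  refine lintegral_le_of_frequently_lintegral_le (fun s => by fun_prop) (fun θ => ?_)
    (hone.mono fun s hs => (lintegral_exp_eq_one_iff.2 hs).le)
  have hcont : ContinuousAt (fun s => Real.exp (-(θ ^ 2 / 2) * s + θ * c s)) 0 := by fun_prop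
  refine ENNReal.tendsto_ofReal ?_
  simpa using hcont.tendsto.mono_left nhdsWithin_le_nhds

lemma integral_gaussKernel_withDensity_exp {d : ℂ → ℂ} (hd : d s = ((c s - c 0 : ℝ) : ℂ)) :
    ∫ θ, gaussKernel d θ s ∂(ν.withDensity fun θ => ENNReal.ofReal (Real.exp (θ * c 0))) =
      ((∫ θ, Real.exp (-(θ ^ 2 / 2) * s + θ * c s) ∂ν : ℝ) : ℂ) := by
  rw [integral_withDensity_eq_integral_toReal_smul (by fun_prop)
    (.of_forall fun _ => ENNReal.ofReal_lt_top), ← integral_complex_ofReal]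
  refine integral_congr_ae (.of_forall fun θ => ?_)
  dsimp only
  rw [gaussKernel_eq_ofReal_norm (Complex.ofReal_im s) (by rw [hd]; exact Complex.ofReal_im _),
    norm_gaussKernel, hd, ENNReal.toReal_ofReal (Real.exp_pos _).le, Complex.real_smul,
    ← Complex.ofReal_mul, ← Real.exp_add, Complex.ofReal_re, Complex.ofReal_re]
  ring_nf

theorem integral_exp_eq_one_of_frequently [IsFiniteMeasure ν] {a : ℝ} (ha : 0 < a)
    (hν : ∀ᵐ θ ∂ν, a ≤ θ) (hc : AnalyticOnNhd ℝ c (Ici 0))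
    (hone : ∃ᶠ s in 𝓝[>] 0, ∫ θ, Real.exp (-(θ ^ 2 / 2) * s + θ * c s) ∂ν = 1) (hs : 0 < s) :
    ∫ θ, Real.exp (-(θ ^ 2 / 2) * s + θ * c s) ∂ν = 1 := by
  have hc0 : AnalyticAt ℝ c 0 := hc 0 self_mem_Ici
  let p := ν.withDensity fun θ => ENNReal.ofReal (Real.exp (θ * c 0))
  have : IsFiniteMeasure p := isFiniteMeasure_withDensity <|
    ne_top_of_le_ne_top ENNReal.one_ne_top
      (lintegral_exp_mul_le_one_of_frequently hc0.continuousAt hone)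
  obtain ⟨d, hd, hdc⟩ := exists_complex_extension_of_analyticAt (hc0.sub analyticAt_const)
  have heq : ∀ᶠ s : ℝ in 𝓝[>] 0, ∫ θ, gaussKernel d θ s ∂p =
      ((∫ θ, Real.exp (-(θ ^ 2 / 2) * s + θ * c s) ∂ν : ℝ) : ℂ) :=
    (hdc.filter_mono nhdsWithin_le_nhds).mono fun s => integral_gaussKernel_withDensity_exp
  have hlocal : ∀ᶠ s : ℝ in 𝓝[>] 0, ∫ θ, gaussKernel d θ s ∂p = 1 :=
    eventually_integral_gaussKernel_eq_one ha (withDensity_absolutelyContinuous _ _ hν)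
      (by simpa using hd) (by simpa using hdc.self_of_nhds)
      (hdc.mono fun s hs => by rw [hs]; exact Complex.ofReal_im _)
      ((hone.and_eventually heq).mono fun s hs => by rw [hs.2, hs.1, Complex.ofReal_one])
  obtain ⟨τ, hτ, hτone⟩ := mem_nhdsGT_iff_exists_Ioo_subset.1 (heq.and hlocal)
  have hτ' : τ / 2 ∈ Ioo 0 τ := ⟨half_pos hτ, half_lt_self hτ⟩
  refine AnalyticOnNhd.eqOn_of_preconnected_of_eventuallyEq
    (fun s hs => analyticAt_integral_exp (hν.mono fun _ => ha.le.trans) hs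
      (hc s (Ioi_subset_Ici_self hs)))
    (analyticOnNhd_const (v := (1 : ℝ))) isPreconnected_Ioi (mem_Ioi.2 hτ'.1) ?_ hs
  filter_upwards [Ioo_mem_nhds hτ'.1 hτ'.2] with x hx
  obtain ⟨hxeq, hxone⟩ := hτone hx
  exact_mod_cast hxeq.symm.trans hxone

end GlobalIdentity

/-! ### Exponential integrals in the frequency variable -/

section FrequencyIntegrals

variable {α : Type*} [MeasurableSpace α] {lam : Measure α} {S C : α → ℝ} {K m : ℝ}

lemma aestronglyMeasurable_cexp (hS : AEStronglyMeasurable S lam)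
    (hC : AEStronglyMeasurable C lam) (z : ℂ) :
    AEStronglyMeasurable (fun t => Complex.exp (-(z ^ 2 / 2) * S t + z * C t)) lam :=
  Complex.continuous_exp.comp_aestronglyMeasurable <|
    ((Complex.continuous_ofReal.comp_aestronglyMeasurable hS).const_mul _).add
      ((Complex.continuous_ofReal.comp_aestronglyMeasurable hC).const_mul _)

lemma aestronglyMeasurable_exp (hS : AEStronglyMeasurable S lam)
    (hC : AEStronglyMeasurable C lam) (θ : ℝ) :
    AEStronglyMeasurable (fun t => Real.exp (-(θ ^ 2 / 2) * S t + θ * C t)) lam :=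
  Real.continuous_exp.comp_aestronglyMeasurable ((hS.const_mul _).add (hC.const_mul _))

lemma norm_cexp_le {S C K R : ℝ} {z : ℂ} (hz : ‖z‖ ≤ R) (hS : |S| ≤ K) (hC : |C| ≤ K) :
    ‖Complex.exp (-(z ^ 2 / 2) * S + z * C)‖ ≤ Real.exp (R ^ 2 / 2 * K + R * K) := by
  have hR : 0 ≤ R := (norm_nonneg z).trans hz
  have hexp : ‖-(z ^ 2 / 2) * S + z * C‖ ≤ R ^ 2 / 2 * K + R * K :=
    calc ‖-(z ^ 2 / 2) * S + z * C‖ ≤ ‖z‖ ^ 2 / 2 * |S| + ‖z‖ * |C| :=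
          (norm_add_le _ _).trans_eq (by simp)
      _ ≤ R ^ 2 / 2 * K + R * K := by gcongr
  rw [Complex.norm_exp]
  exact Real.exp_le_exp.2 ((Complex.re_le_norm _).trans hexp)

lemma holomorphicFamily_cexp (hS : AEStronglyMeasurable S lam) (hC : AEStronglyMeasurable C lam)
    (hSK : ∀ᵐ t ∂lam, |S t| ≤ K) (hCK : ∀ᵐ t ∂lam, |C t| ≤ K) :
    HolomorphicFamily lam univ fun z t => Complex.exp (-(z ^ 2 / 2) * S t + z * C t) where
  aestronglyMeasurable z _ := aestronglyMeasurable_cexp hS hC z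
  differentiableOn := .of_forall fun t => by fun_prop
  locally_bounded z _ := by
    refine ⟨1, one_pos, Real.exp ((‖z‖ + 1) ^ 2 / 2 * K + (‖z‖ + 1) * K), ?_⟩
    filter_upwards [hSK, hCK] with t htS htC w hw
    exact norm_cexp_le (norm_lt_of_mem_ball hw).le htS htC

lemma analyticAt_integral_exp_frequency [IsFiniteMeasure lam] (hS : AEStronglyMeasurable S lam)
    (hC : AEStronglyMeasurable C lam) (hSK : ∀ᵐ t ∂lam, |S t| ≤ K) (hCK : ∀ᵐ t ∂lam, |C t| ≤ K)
    (θ : ℝ) :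
    AnalyticAt ℝ (fun θ : ℝ => ∫ t, Real.exp (-(θ ^ 2 / 2) * S t + θ * C t) ∂lam) θ := by
  have hanalytic := ((holomorphicFamily_cexp hS hC hSK hCK).differentiableOn_integral
    isOpen_univ).analyticAt (univ_mem (f := 𝓝 (θ : ℂ)))
  have hre : ∀ x : ℝ, (∫ t, Complex.exp (-((x : ℂ) ^ 2 / 2) * S t + x * C t) ∂lam).re =
      ∫ t, Real.exp (-(x ^ 2 / 2) * S t + x * C t) ∂lam := fun x => by
    rw [← Complex.ofReal_re (∫ t, Real.exp _ ∂lam), ← integral_complex_ofReal]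
    push_cast
    rfl
  simp only [← hre]
  exact (Complex.reCLM.analyticAt _).comp
    ((hanalytic.restrictScalars (𝕜 := ℝ)).comp (Complex.ofRealCLM.analyticAt θ))

lemma exp_neg_sq_add_le {S C K m θ : ℝ} (hm : 0 < m) (hθ : θ ≤ 0) (hS : 0 ≤ S)
    (hC : -K ≤ C) (hmax : m ≤ max S C) :
    Real.exp (-(θ ^ 2 / 2) * S + θ * C) ≤ Real.exp (K ^ 2 / (2 * m)) := by
  rw [Real.exp_le_exp]
  rcases le_max_iff.1 hmax with hmS | hmC
  · calc -(θ ^ 2 / 2) * S + θ * C ≤ -(θ ^ 2 / 2 * m) + θ * -K := by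
          rw [neg_mul]
          exact add_le_add (neg_le_neg (by gcongr)) (mul_le_mul_of_nonpos_left hC hθ)
      _ = K ^ 2 / (2 * m) - (θ * m + K) ^ 2 / (2 * m) := by field_simp; ring
      _ ≤ K ^ 2 / (2 * m) := sub_le_self _ (by positivity)
  · have hS' : 0 ≤ θ ^ 2 / 2 * S := by positivity
    have hC' : θ * C ≤ 0 := mul_nonpos_of_nonpos_of_nonneg hθ (hm.le.trans hmC)
    have hK : 0 ≤ K ^ 2 / (2 * m) := by positivity
    linarith

lemma tendsto_exp_neg_sq_add_atBot {S C : ℝ} (hS : 0 ≤ S) (hmax : 0 < max S C) :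
    Tendsto (fun θ : ℝ => Real.exp (-(θ ^ 2 / 2) * S + θ * C)) atBot (𝓝 0) := by
  have hlim : Tendsto (fun u : ℝ => u * (u * (S / 2) + C)) atTop atTop := by
    rcases hS.eq_or_lt with rfl | hS
    · have hC : 0 < C := by simpa using hmax
      simpa using tendsto_id.atTop_mul_const hC
    · exact tendsto_id.atTop_mul_atTop₀
        (tendsto_atTop_add_const_right _ _ (tendsto_id.atTop_mul_const (half_pos hS)))
  refine Real.tendsto_exp_atBot.comp ((tendsto_neg_atTop_atBot.comp
    (hlim.comp tendsto_neg_atBot_atTop)).congr fun θ => ?_)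
  simp only [Function.comp_apply]
  ring

lemma tendsto_integral_exp_atBot [IsFiniteMeasure lam] (hS : AEStronglyMeasurable S lam)
    (hC : AEStronglyMeasurable C lam) (hS0 : ∀ᵐ t ∂lam, 0 ≤ S t) (hCK : ∀ᵐ t ∂lam, -K ≤ C t)
    (hm : 0 < m) (hmax : ∀ᵐ t ∂lam, m ≤ max (S t) (C t)) :
    Tendsto (fun θ : ℝ => ∫ t, Real.exp (-(θ ^ 2 / 2) * S t + θ * C t) ∂lam) atBot (𝓝 0) := by
  rw [← integral_zero α ℝ (μ := lam)]
  refine tendsto_integral_filter_of_dominated_convergence (fun _ => Real.exp (K ^ 2 / (2 * m)))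
    (.of_forall (aestronglyMeasurable_exp hS hC)) ?_ (integrable_const _) ?_
  · filter_upwards [eventually_le_atBot 0] with θ hθ
    filter_upwards [hS0, hCK, hmax] with t htS htC htmax
    rw [Real.norm_of_nonneg (Real.exp_pos _).le]
    exact exp_neg_sq_add_le hm hθ htS htC htmax
  · filter_upwards [hS0, hmax] with t htS htmax
    exact tendsto_exp_neg_sq_add_atBot htS (hm.trans_le htmax)

lemma tendsto_integral_exp_atTop [IsFiniteMeasure lam] (hS : AEStronglyMeasurable S lam)
    (hC : AEStronglyMeasurable C lam) (hm : 0 < m) (hSm : ∀ᵐ t ∂lam, m ≤ S t)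
    (hCK : ∀ᵐ t ∂lam, C t ≤ K) :
    Tendsto (fun θ : ℝ => ∫ t, Real.exp (-(θ ^ 2 / 2) * S t + θ * C t) ∂lam) atTop (𝓝 0) := by
  have h := (tendsto_integral_exp_atBot hS hC.neg (hSm.mono fun _ => hm.le.trans)
    (hCK.mono fun _ => neg_le_neg) hm (hSm.mono fun _ => le_max_of_le_left)).comp
    tendsto_neg_atTop_atBot
  simpa [Function.comp_def] using h

lemma eventually_integral_exp_ne [IsFiniteMeasure lam] (hS : AEStronglyMeasurable S lam)
    (hC : AEStronglyMeasurable C lam) (hS0 : ∀ᵐ t ∂lam, 0 ≤ S t) (hSK : ∀ᵐ t ∂lam, |S t| ≤ K)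
    (hCK : ∀ᵐ t ∂lam, |C t| ≤ K) (hm : 0 < m) (hmax : ∀ᵐ t ∂lam, m ≤ max (S t) (C t))
    {y : ℝ} (hy : y ≠ 0) (θ₀ : ℝ) :
    ∀ᶠ θ in 𝓝[≠] θ₀, ∫ t, Real.exp (-(θ ^ 2 / 2) * S t + θ * C t) ∂lam ≠ y := by
  have hanalytic := analyticAt_integral_exp_frequency hS hC hSK hCK
  refine ((hanalytic θ₀).eventually_eq_or_eventually_ne analyticAt_const).resolve_left
    fun heq => hy ?_
  have hconst := AnalyticOnNhd.eqOn_of_preconnected_of_eventuallyEq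
    (fun θ _ => hanalytic θ) analyticOnNhd_const isPreconnected_univ (mem_univ θ₀) heq
  exact tendsto_nhds_unique tendsto_const_nhds <|
    (tendsto_integral_exp_atBot hS hC hS0 (hCK.mono fun _ h => (abs_le.1 h).1) hm hmax).congr
      fun θ => hconst (mem_univ θ)

end FrequencyIntegrals

lemma measure_singleton_eq_zero_of_lintegral_le {ι α : Type*} [MeasurableSpace α]
    [MeasurableSingletonClass α] {lam : Measure α} {l : Filter ι} [l.NeBot] {F : ι → α → ℝ≥0∞}
    {C : ℝ≥0∞} {x : α} (hC : C ≠ ∞) (hx : Tendsto (F · x) l (𝓝 ∞))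
    (hF : ∀ᶠ i in l, ∫⁻ y, F i y ∂lam ≤ C) : lam {x} = 0 := by
  by_contra hne
  have hlim : Tendsto (fun i => F i x * lam {x}) l (𝓝 ∞) := by
    rw [← ENNReal.top_mul hne]
    exact ENNReal.Tendsto.mul_const hx (.inl ENNReal.top_ne_zero)
  refine hC (top_unique (le_of_tendsto hlim (hF.mono fun i hi => ?_)))
  rw [← lintegral_singleton (F i) x]
  exact (setLIntegral_le_lintegral _ _).trans hi

lemma tendsto_lintegral_exp {ι : Type*} {l : Filter ι} [l.IsCountablyGenerated]
    {ν : Measure ℝ} [IsFiniteMeasure ν] {N s c : ℝ} {S C : ι → ℝ} (hν : ∀ᵐ θ ∂ν, |θ| ≤ N)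
    (hS : Tendsto S l (𝓝 s)) (hC : Tendsto C l (𝓝 c)) :
    Tendsto (fun i => ∫⁻ θ, ENNReal.ofReal (Real.exp (-(θ ^ 2 / 2) * S i + θ * C i)) ∂ν) l
      (𝓝 (∫⁻ θ, ENNReal.ofReal (Real.exp (-(θ ^ 2 / 2) * s + θ * c)) ∂ν)) := by
  refine tendsto_lintegral_filter_of_dominated_convergence
    (fun _ => ENNReal.ofReal (Real.exp (N ^ 2 / 2 * (|s| + 1) + N * (|c| + 1))))
    (.of_forall fun i => by fun_prop) ?_
    (by simpa using ENNReal.mul_ne_top ENNReal.ofReal_ne_top (measure_ne_top ν univ))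
    (.of_forall fun θ => ?_)
  · filter_upwards [hS.abs.eventually_le_const (lt_add_one _),
      hC.abs.eventually_le_const (lt_add_one _)] with i hiS hiC
    filter_upwards [hν] with θ hθ
    refine ENNReal.ofReal_le_ofReal (Real.exp_le_exp.2 ?_)
    have hN : 0 ≤ N := (abs_nonneg θ).trans hθ
    calc -(θ ^ 2 / 2) * S i + θ * C i ≤ |θ| ^ 2 / 2 * |S i| + |θ| * |C i| :=
          (le_abs_self _).trans ((abs_add_le _ _).trans_eq (by simp [abs_mul, abs_div]))
      _ ≤ N ^ 2 / 2 * (|s| + 1) + N * (|c| + 1) := by gcongr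
  · exact ENNReal.tendsto_ofReal ((Real.continuous_exp.tendsto _).comp
      ((hS.const_mul _).add (hC.const_mul _)))

/-! ### Behaviour at small times: the boundary atom -/

lemma eventually_eq_zero_of_norm_le_exp_neg_div {E : Type*} [NormedAddCommGroup E]
    [NormedSpace ℝ E] {A : ℝ → E} {κ : ℝ} (hκ : 0 < κ) (hA : AnalyticAt ℝ A 0)
    (hflat : ∀ᶠ t in 𝓝[>] 0, ‖A t‖ ≤ Real.exp (-(κ / t))) : ∀ᶠ t in 𝓝 0, A t = 0 := by
  by_contra hne
  obtain ⟨n, g, hg, hg0, hAg⟩ := hA.exists_eventuallyEq_pow_smul_nonzero_iff.2 hne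
  have hinv : Tendsto (fun t : ℝ => κ / t) (𝓝[>] 0) atTop := by
    simpa only [div_eq_mul_inv] using tendsto_inv_nhdsGT_zero.const_mul_atTop hκ
  have hexp : Tendsto (fun t : ℝ => (κ ^ n)⁻¹ * ((κ / t) ^ n * Real.exp (-(κ / t)))) (𝓝[>] 0)
      (𝓝 0) := by
    simpa using ((Real.tendsto_pow_mul_exp_neg_atTop_nhds_zero n).comp hinv).const_mul (κ ^ n)⁻¹
  refine hg0 (tendsto_nhds_unique (hg.continuousAt.tendsto.mono_left nhdsWithin_le_nhds)
    (squeeze_zero_norm' ?_ hexp))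
  filter_upwards [hflat, hAg.filter_mono nhdsWithin_le_nhds, self_mem_nhdsWithin]
    with t htflat htA (ht : 0 < t)
  have hgt : t ^ n * ‖g t‖ ≤ Real.exp (-(κ / t)) := by
    rwa [htA, sub_zero, norm_smul, norm_pow, Real.norm_of_nonneg ht.le] at htflat
  calc ‖g t‖ ≤ Real.exp (-(κ / t)) / t ^ n := by rwa [le_div_iff₀' (by positivity)]
    _ = (κ ^ n)⁻¹ * ((κ / t) ^ n * Real.exp (-(κ / t))) := by rw [div_pow]; field_simp

lemma rTheta_pos (θ t x : ℝ) : 0 < rTheta θ t x := Real.exp_pos _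

lemma continuous_rTheta (t x : ℝ) : Continuous fun θ => rTheta θ t x := by
  unfold rTheta
  fun_prop

section BoundaryAtom

variable {b : ℝ → ℝ} {μ : Measure ℝ} {η θ t t₁ : ℝ}

lemma rTheta_eq_exp_dslope (ht : t ≠ 0) :
    rTheta θ t (b t) = Real.exp (θ * (dslope b 0 t - (θ - 2 * b 0) / 2 / t)) := by
  have hb : b t = b 0 + t * dslope b 0 t := by
    have := sub_smul_dslope b 0 t
    rw [sub_zero, smul_eq_mul] at this
    linarith
  rw [rTheta, hb]
  congr 1
  field_simp
  ring

lemma rMu_eq_add_setLIntegral_Ioi (hμ : ∀ᵐ θ ∂μ, 2 * b 0 ≤ θ) (ht : t ≠ 0) :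
    rMu μ t (b t) = ENNReal.ofReal (Real.exp (2 * b 0 * dslope b 0 t)) * μ {2 * b 0} +
      ∫⁻ θ in Ioi (2 * b 0), ENNReal.ofReal (rTheta θ t (b t)) ∂μ := by
  have hcompl : ((Ioi (2 * b 0))ᶜ : Set ℝ) =ᵐ[μ] ({2 * b 0} : Set ℝ) := by
    filter_upwards [hμ] with θ hθ
    exact propext ⟨fun h => le_antisymm (not_lt.1 h) hθ, fun h => not_lt.2 (le_of_eq h)⟩
  rw [rMu, ← lintegral_add_compl _ measurableSet_Ioi, add_comm, setLIntegral_congr hcompl,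
    lintegral_singleton, rTheta_eq_exp_dslope ht]
  simp

lemma eventually_rTheta_le_exp_neg_mul (hb0 : 0 < b 0) (hη : 0 < η)
    (hb : ContinuousAt (dslope b 0) 0) (ht₁ : 0 < t₁) :
    ∀ᶠ t in 𝓝[>] 0, ∀ θ ≥ 2 * b 0 + η, rTheta θ t (b t) ≤
      Real.exp (-(b 0 * η / 2 / t)) * rTheta θ t₁ (b t₁) := by
  have hlarge : ∀ᶠ t in 𝓝[>] 0,
      dslope b 0 t - dslope b 0 t₁ + η / 2 / t₁ ≤ η / 4 / t := by
    have hinv : Tendsto (fun t => η / 4 / t) (𝓝[>] 0) atTop := by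
      simpa only [div_eq_mul_inv] using tendsto_inv_nhdsGT_zero.const_mul_atTop (by positivity)
    have hbdd := ((hb.tendsto.mono_left (nhdsWithin_le_nhds (s := Ioi 0))).sub_const
      (dslope b 0 t₁)).add_const (η / 2 / t₁)
    filter_upwards [hbdd.eventually_le_const (lt_add_one _), hinv.eventually_ge_atTop _]
      with t h₁ h₂ using h₁.trans h₂
  filter_upwards [hlarge, self_mem_nhdsWithin,
    (eventually_le_nhds ht₁).filter_mono nhdsWithin_le_nhds] with t hlt (ht : 0 < t) htt₁ θ hθ
  rw [rTheta_eq_exp_dslope ht.ne', rTheta_eq_exp_dslope ht₁.ne', ← Real.exp_add, Real.exp_le_exp]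
  have hθη : η / 2 * (1 / t - 1 / t₁) ≤ (θ - 2 * b 0) / 2 * (1 / t - 1 / t₁) := by
    have := sub_nonneg.2 (one_div_le_one_div_of_le ht htt₁)
    gcongr
    linarith
  have hslope : dslope b 0 t - (θ - 2 * b 0) / 2 / t ≤
      -(η / 4 / t) + (dslope b 0 t₁ - (θ - 2 * b 0) / 2 / t₁) := by
    have : η / 2 * (1 / t) = 2 * (η / 4 / t) := by ring
    simp only [mul_sub, mul_one_div] at hθη this
    linarith
  calc θ * (dslope b 0 t - (θ - 2 * b 0) / 2 / t)
      ≤ θ * (-(η / 4 / t) + (dslope b 0 t₁ - (θ - 2 * b 0) / 2 / t₁)) := by gcongr; linarith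
    _ ≤ -(b 0 * η / 2 / t) + θ * (dslope b 0 t₁ - (θ - 2 * b 0) / 2 / t₁) := by
        have : 2 * b 0 * (η / 4 / t) ≤ θ * (η / 4 / t) := by gcongr; linarith
        linarith [show 2 * b 0 * (η / 4 / t) = b 0 * η / 2 / t by ring]

lemma eventually_setLIntegral_rTheta_le (hb0 : 0 < b 0) (hη : 0 < η)
    (hb : ContinuousAt (dslope b 0) 0) (hgap : ∀ᵐ θ ∂μ, θ ∉ Ioo (2 * b 0) (2 * b 0 + η))
    (ht₁ : 0 < t₁) (hone : rMu μ t₁ (b t₁) ≤ 1) :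
    ∀ᶠ t in 𝓝[>] 0, ∫⁻ θ in Ioi (2 * b 0), ENNReal.ofReal (rTheta θ t (b t)) ∂μ ≤
      ENNReal.ofReal (Real.exp (-(b 0 * η / 2 / t))) := by
  filter_upwards [eventually_rTheta_le_exp_neg_mul hb0 hη hb ht₁] with t ht
  have hIoi : ∀ᵐ θ ∂μ.restrict (Ioi (2 * b 0)), 2 * b 0 + η ≤ θ := by
    rw [ae_restrict_iff' measurableSet_Ioi]
    filter_upwards [hgap] with θ hθ hθ0
    exact not_lt.1 fun hlt => hθ ⟨hθ0, hlt⟩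
  calc ∫⁻ θ in Ioi (2 * b 0), ENNReal.ofReal (rTheta θ t (b t)) ∂μ
      ≤ ∫⁻ θ in Ioi (2 * b 0), ENNReal.ofReal (Real.exp (-(b 0 * η / 2 / t))) *
          ENNReal.ofReal (rTheta θ t₁ (b t₁)) ∂μ := lintegral_mono_ae <| hIoi.mono fun θ hθ => by
        rw [← ENNReal.ofReal_mul (Real.exp_pos _).le]
        exact ENNReal.ofReal_le_ofReal (ht θ hθ)
    _ = ENNReal.ofReal (Real.exp (-(b 0 * η / 2 / t))) *
          ∫⁻ θ in Ioi (2 * b 0), ENNReal.ofReal (rTheta θ t₁ (b t₁)) ∂μ :=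
        lintegral_const_mul' _ _ ENNReal.ofReal_ne_top
    _ ≤ ENNReal.ofReal (Real.exp (-(b 0 * η / 2 / t))) :=
        mul_le_of_le_one_right' ((setLIntegral_le_lintegral _ _).trans hone)

lemma setLIntegral_rTheta_eq_zero_iff {s : Set ℝ} {x : ℝ} (hs : MeasurableSet s) :
    ∫⁻ θ in s, ENNReal.ofReal (rTheta θ t x) ∂μ = 0 ↔ μ s = 0 := by
  rw [setLIntegral_eq_zero_iff hs (continuous_rTheta t x).measurable.ennreal_ofReal]
  simp [(rTheta_pos _ t x).not_ge, measure_eq_zero_iff_ae_notMem]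

-- The mass of the boundary atom contributes an analytic function of time, whereas the mass beyond
-- the gap is flat at time zero, so that the two can only add up to `1` if the latter vanishes.
theorem measure_Ioi_eq_zero_of_rMu_eq_one (hba : AnalyticAt ℝ b 0) (hb0 : 0 < b 0) (hη : 0 < η)
    (hμ : ∀ᵐ θ ∂μ, 2 * b 0 ≤ θ) (hgap : ∀ᵐ θ ∂μ, θ ∉ Ioo (2 * b 0) (2 * b 0 + η))
    (hone : ∀ᶠ t in 𝓝[>] 0, rMu μ t (b t) = 1) : μ (Ioi (2 * b 0)) = 0 := by
  have hslope : AnalyticAt ℝ (dslope b 0) 0 := by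
    obtain ⟨p, hp⟩ := hba
    exact ⟨_, hp.has_fpower_series_dslope_fslope⟩
  obtain ⟨t₁, ht₁one, ht₁ : 0 < t₁⟩ := (hone.and self_mem_nhdsWithin).exists
  let A : ℝ → ℝ := fun t => 1 - Real.exp (2 * b 0 * dslope b 0 t) * μ.real {2 * b 0}
  have htail : ∀ᶠ t in 𝓝[>] 0,
      A t = (∫⁻ θ in Ioi (2 * b 0), ENNReal.ofReal (rTheta θ t (b t)) ∂μ).toReal := by
    filter_upwards [hone, self_mem_nhdsWithin] with t htone (ht : 0 < t)
    rw [rMu_eq_add_setLIntegral_Ioi hμ ht.ne'] at htone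
    obtain ⟨hatom, hrest⟩ := ENNReal.add_ne_top.1 (htone ▸ ENNReal.one_ne_top)
    have := congrArg ENNReal.toReal htone
    rw [ENNReal.toReal_add hatom hrest, ENNReal.toReal_mul,
      ENNReal.toReal_ofReal (Real.exp_pos _).le, ENNReal.toReal_one] at this
    exact sub_eq_of_eq_add' this.symm
  have hdecay := eventually_setLIntegral_rTheta_le hb0 hη hslope.continuousAt hgap ht₁ ht₁one.le
  have hflat : ∀ᶠ t in 𝓝[>] 0, ‖A t‖ ≤ Real.exp (-(b 0 * η / 2 / t)) := by
    filter_upwards [htail, hdecay] with t ht hle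
    rw [ht, Real.norm_of_nonneg ENNReal.toReal_nonneg]
    exact ENNReal.toReal_le_of_le_ofReal (Real.exp_pos _).le hle
  have hzero := eventually_eq_zero_of_norm_le_exp_neg_div (by positivity) (by fun_prop) hflat
  obtain ⟨t, ht, hAt, hle⟩ := (htail.and
    ((hzero.filter_mono nhdsWithin_le_nhds).and hdecay)).exists
  refine (setLIntegral_rTheta_eq_zero_iff measurableSet_Ioi).1 <|
    ((ENNReal.toReal_eq_zero_iff _).1 (ht.symm.trans hAt)).resolve_right
      (ne_top_of_le_ne_top ENNReal.ofReal_ne_top hle)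

end BoundaryAtom

/-! ### The normalised kernel -/

/-- The kernel `r_θ(t, b(t)) / g(θ)`, where `g(θ) = r_θ(t0, x0)`: after this normalisation the dual
constraint reads `∫ normKernel dλ ≤ 1`. -/
noncomputable def normKernel (b : ℝ → ℝ) (t0 x0 θ t : ℝ) : ℝ :=
  rTheta θ t (b t) / rTheta θ t0 x0

/-- The coefficient of `-θ² / 2` in the exponent of `normKernel`. -/
noncomputable def quadCoeff (t0 t : ℝ) : ℝ := 1 / t - 1 / t0

/-- The coefficient of `θ` in the exponent of `normKernel`. -/
noncomputable def linCoeff (b : ℝ → ℝ) (t0 x0 t : ℝ) : ℝ := b t / t - x0 / t0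

section NormKernel

variable {b : ℝ → ℝ} {t0 x0 ε t : ℝ}

lemma normKernel_eq_exp (b : ℝ → ℝ) (t0 x0 θ t : ℝ) : normKernel b t0 x0 θ t =
    Real.exp (-(θ ^ 2 / 2) * quadCoeff t0 t + θ * linCoeff b t0 x0 t) := by
  rw [normKernel, rTheta, rTheta, ← Real.exp_sub, quadCoeff, linCoeff]
  congr 1
  ring

lemma normKernel_pos (b : ℝ → ℝ) (t0 x0 θ t : ℝ) : 0 < normKernel b t0 x0 θ t :=
  div_pos (rTheta_pos _ _ _) (rTheta_pos _ _ _)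

lemma continuous_normKernel (b : ℝ → ℝ) (t0 x0 t : ℝ) :
    Continuous fun θ => normKernel b t0 x0 θ t :=
  (continuous_rTheta _ _).div (continuous_rTheta _ _) fun _ => (rTheta_pos _ _ _).ne'

lemma quadCoeff_pos (ht : 0 < t) (htt0 : t < t0) : 0 < quadCoeff t0 t :=
  sub_pos.2 (one_div_lt_one_div_of_lt ht htt0)

lemma quadCoeff_nonneg (ht : 0 < t) (htt0 : t ≤ t0) : 0 ≤ quadCoeff t0 t :=
  sub_nonneg.2 (one_div_le_one_div_of_le ht htt0)

lemma quadCoeff_anti {t₁ : ℝ} (ht : 0 < t) (htt₁ : t ≤ t₁) : quadCoeff t0 t₁ ≤ quadCoeff t0 t :=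
  sub_le_sub_right (one_div_le_one_div_of_le ht htt₁) _

lemma linCoeff_self_pos (ht0 : 0 < t0) (hx0 : x0 < b t0) : 0 < linCoeff b t0 x0 t0 :=
  sub_pos.2 (div_lt_div_of_pos_right hx0 ht0)

lemma continuousOn_quadCoeff (hε : 0 < ε) : ContinuousOn (quadCoeff t0) (Icc ε t0) :=
  (continuousOn_const.div continuousOn_id fun _ ht => (hε.trans_le ht.1).ne').sub
    continuousOn_const

lemma continuousOn_linCoeff (hε : 0 < ε) (hb : ContinuousOn b (Icc ε t0)) :
    ContinuousOn (linCoeff b t0 x0) (Icc ε t0) :=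
  (hb.div continuousOn_id fun _ ht => (hε.trans_le ht.1).ne').sub continuousOn_const

lemma continuousOn_normKernel (hε : 0 < ε) (hb : ContinuousOn b (Icc ε t0)) (θ : ℝ) :
    ContinuousOn (normKernel b t0 x0 θ) (Icc ε t0) := by
  have hS := continuousOn_quadCoeff (t0 := t0) hε
  have hC := continuousOn_linCoeff (x0 := x0) hε hb
  simp only [funext (normKernel_eq_exp b t0 x0 θ)]
  fun_prop

lemma exists_pos_le_max_quadCoeff_linCoeff (hε : 0 < ε) (hεt : ε < t0)
    (hb : ContinuousOn b (Icc ε t0)) (hx0 : x0 < b t0) :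
    ∃ m > 0, ∀ t ∈ Icc ε t0, m ≤ max (quadCoeff t0 t) (linCoeff b t0 x0 t) := by
  refine isCompact_Icc.exists_forall_le'
    ((continuousOn_quadCoeff hε).sup (continuousOn_linCoeff hε hb)) fun t ht => ?_
  rcases ht.2.lt_or_eq with htt0 | rfl
  · exact lt_max_of_lt_left (quadCoeff_pos (hε.trans_le ht.1) htt0)
  · exact lt_max_of_lt_right (linCoeff_self_pos (hε.trans hεt) hx0)

lemma tendsto_normKernel_atTop (ht : 0 < t) (htt0 : t < t0) :
    Tendsto (fun θ => normKernel b t0 x0 θ t) atTop (𝓝 0) := by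
  have hS := quadCoeff_pos ht htt0
  simpa [Function.comp_def, normKernel_eq_exp] using (tendsto_exp_neg_sq_add_atBot
    (C := -linCoeff b t0 x0 t) hS.le (lt_max_of_lt_left hS)).comp tendsto_neg_atTop_atBot

lemma tendsto_normKernel_self_atTop (ht0 : 0 < t0) (hx0 : x0 < b t0) :
    Tendsto (fun θ => normKernel b t0 x0 θ t0) atTop atTop := by
  simp only [normKernel_eq_exp, quadCoeff, sub_self, mul_zero, zero_add]
  exact Real.tendsto_exp_atTop.comp (tendsto_id.atTop_mul_const (linCoeff_self_pos ht0 hx0))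

lemma ofReal_mul_lintegral_normKernel (lam : Measure ℝ) (θ : ℝ) :
    ENNReal.ofReal (rTheta θ t0 x0) * ∫⁻ t, ENNReal.ofReal (normKernel b t0 x0 θ t) ∂lam =
      ∫⁻ t, ENNReal.ofReal (rTheta θ t (b t)) ∂lam := by
  rw [← lintegral_const_mul' _ _ ENNReal.ofReal_ne_top]
  refine lintegral_congr fun t => ?_
  rw [← ENNReal.ofReal_mul (rTheta_pos θ t0 x0).le, normKernel,
    mul_div_cancel₀ _ (rTheta_pos θ t0 x0).ne']

end NormKernel

section InvGMeasure

variable {t0 x0 : ℝ} {ν : Measure ℝ}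

/-- The measure `g⁻¹ ν`, where `g(θ) = r_θ(t0, x0)`; it turns the normalised kernel back into
`r_θ`. -/
noncomputable def invGMeasure (t0 x0 : ℝ) (ν : Measure ℝ) : Measure ℝ :=
  ν.withDensity fun θ => ENNReal.ofReal (rTheta θ t0 x0)⁻¹

lemma measurable_ofReal_rTheta (t x : ℝ) : Measurable fun θ => ENNReal.ofReal (rTheta θ t x) :=
  (continuous_rTheta t x).measurable.ennreal_ofReal

lemma measurable_ofReal_inv_rTheta (t x : ℝ) :
    Measurable fun θ => ENNReal.ofReal (rTheta θ t x)⁻¹ :=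
  (continuous_rTheta t x).measurable.inv.ennreal_ofReal

lemma rMu_invGMeasure (b : ℝ → ℝ) (t : ℝ) :
    rMu (invGMeasure t0 x0 ν) t (b t) = ∫⁻ θ, ENNReal.ofReal (normKernel b t0 x0 θ t) ∂ν := by
  rw [rMu, invGMeasure, lintegral_withDensity_eq_lintegral_mul _ (measurable_ofReal_inv_rTheta _ _)
    (measurable_ofReal_rTheta _ _)]
  refine lintegral_congr fun θ => ?_
  rw [Pi.mul_apply, ← ENNReal.ofReal_mul (inv_nonneg.2 (rTheta_pos θ t0 x0).le), normKernel,
    div_eq_inv_mul]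

lemma lintegral_rTheta_invGMeasure :
    ∫⁻ θ, ENNReal.ofReal (rTheta θ t0 x0) ∂invGMeasure t0 x0 ν = ν univ := by
  rw [invGMeasure, lintegral_withDensity_eq_lintegral_mul _ (measurable_ofReal_inv_rTheta _ _)
    (measurable_ofReal_rTheta _ _), ← lintegral_one]
  refine lintegral_congr fun θ => ?_
  rw [Pi.mul_apply, ← ENNReal.ofReal_mul (inv_nonneg.2 (rTheta_pos θ t0 x0).le),
    inv_mul_cancel₀ (rTheta_pos θ t0 x0).ne', ENNReal.ofReal_one]

lemma ae_invGMeasure_iff {p : ℝ → Prop} :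
    (∀ᵐ θ ∂invGMeasure t0 x0 ν, p θ) ↔ ∀ᵐ θ ∂ν, p θ := by
  rw [invGMeasure, ae_withDensity_iff (measurable_ofReal_inv_rTheta _ _)]
  simp [rTheta_pos]

lemma isFiniteMeasure_invGMeasure [IsFiniteMeasure ν] {N : ℝ} (hν : ∀ᵐ θ ∂ν, |θ| ≤ N) :
    IsFiniteMeasure (invGMeasure t0 x0 ν) := by
  have hcont : Continuous fun θ => (rTheta θ t0 x0)⁻¹ :=
    (continuous_rTheta t0 x0).inv₀ fun θ => (rTheta_pos θ t0 x0).ne'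
  have hint : Integrable (fun θ => (rTheta θ t0 x0)⁻¹) ν := by
    rw [← Measure.restrict_eq_self_of_ae_mem (hν.mono fun θ hθ => abs_le.1 hθ)]
    exact hcont.integrableOn_Icc
  exact isFiniteMeasure_withDensity_ofReal hint.2

end InvGMeasure

/-! ### Boundedness of the frequency support -/

section BoundedSupport

variable {b : ℝ → ℝ} {t0 x0 ε : ℝ} {lam ν : Measure ℝ}

lemma aestronglyMeasurable_of_continuousOn_Icc {f : ℝ → ℝ} (hf : ContinuousOn f (Icc ε t0))
    (hlam : ∀ᵐ t ∂lam, t ∈ Icc ε t0) : AEStronglyMeasurable f lam := by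
  rw [← Measure.restrict_eq_self_of_ae_mem hlam]
  exact hf.aestronglyMeasurable measurableSet_Icc

lemma lintegral_normKernel_eq_one_iff (hε : 0 < ε) (hb : ContinuousOn b (Icc ε t0))
    (hlam : ∀ᵐ t ∂lam, t ∈ Icc ε t0) (θ : ℝ) :
    ∫⁻ t, ENNReal.ofReal (normKernel b t0 x0 θ t) ∂lam = 1 ↔
      ∫ t, Real.exp (-(θ ^ 2 / 2) * quadCoeff t0 t + θ * linCoeff b t0 x0 t) ∂lam = 1 := by
  simp only [← normKernel_eq_exp]
  exact lintegral_ofReal_eq_one_iff (.of_forall fun t => (normKernel_pos b t0 x0 θ t).le)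
    (aestronglyMeasurable_of_continuousOn_Icc (continuousOn_normKernel hε hb θ) hlam)

lemma measure_singleton_eq_zero_of_lintegral_normKernel_le {a : ℝ} (ht0 : 0 < t0)
    (hx0 : x0 < b t0) (hF : ∀ θ ≥ a, ∫⁻ t, ENNReal.ofReal (normKernel b t0 x0 θ t) ∂lam ≤ 1) :
    lam {t0} = 0 :=
  measure_singleton_eq_zero_of_lintegral_le
    (F := fun θ t => ENNReal.ofReal (normKernel b t0 x0 θ t)) ENNReal.one_ne_top
    (ENNReal.tendsto_ofReal_atTop.comp (tendsto_normKernel_self_atTop ht0 hx0))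
    ((eventually_ge_atTop a).mono hF)

lemma eventually_lintegral_normKernel_ne_one [IsFiniteMeasure lam] (hε : 0 < ε) (hεt : ε < t0)
    (hb : ContinuousOn b (Icc ε t0)) (hx0 : x0 < b t0) (hlam : ∀ᵐ t ∂lam, t ∈ Icc ε t0) (θ₀ : ℝ) :
    ∀ᶠ θ in 𝓝[≠] θ₀, ∫⁻ t, ENNReal.ofReal (normKernel b t0 x0 θ t) ∂lam ≠ 1 := by
  have hS := continuousOn_quadCoeff (t0 := t0) hε
  have hC := continuousOn_linCoeff (x0 := x0) hε hb
  obtain ⟨KS, hKS⟩ := isCompact_Icc.exists_bound_of_continuousOn hS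
  obtain ⟨KC, hKC⟩ := isCompact_Icc.exists_bound_of_continuousOn hC
  obtain ⟨m, hm, hmax⟩ := exists_pos_le_max_quadCoeff_linCoeff hε hεt hb hx0
  simp only [ne_eq, lintegral_normKernel_eq_one_iff hε hb hlam]
  exact eventually_integral_exp_ne (K := max KS KC)
    (aestronglyMeasurable_of_continuousOn_Icc hS hlam)
    (aestronglyMeasurable_of_continuousOn_Icc hC hlam)
    (hlam.mono fun t ht => quadCoeff_nonneg (hε.trans_le ht.1) ht.2)
    (hlam.mono fun t ht => (hKS t ht).trans (le_max_left _ _))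
    (hlam.mono fun t ht => (hKC t ht).trans (le_max_right _ _)) hm (hlam.mono hmax) one_ne_zero θ₀

lemma eventually_lintegral_normKernel_ne_one_atTop [IsFiniteMeasure lam] {t₁ : ℝ} (hε : 0 < ε)
    (hb : ContinuousOn b (Icc ε t0)) (hlam : ∀ᵐ t ∂lam, t ∈ Icc ε t0) (ht₁ : t₁ ∈ Ico ε t0)
    (hle : ∀ᵐ t ∂lam, t ≤ t₁) :
    ∀ᶠ θ in atTop, ∫⁻ t, ENNReal.ofReal (normKernel b t0 x0 θ t) ∂lam ≠ 1 := by
  have hC := continuousOn_linCoeff (x0 := x0) hε hb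
  obtain ⟨K, hK⟩ := isCompact_Icc.exists_bound_of_continuousOn hC
  simp only [ne_eq, lintegral_normKernel_eq_one_iff hε hb hlam]
  refine (tendsto_integral_exp_atTop (K := K)
    (aestronglyMeasurable_of_continuousOn_Icc (continuousOn_quadCoeff hε) hlam)
    (aestronglyMeasurable_of_continuousOn_Icc hC hlam)
    (quadCoeff_pos (hε.trans_le ht₁.1) ht₁.2) ?_ ?_).eventually_ne zero_ne_one
  · filter_upwards [hlam, hle] with t ht htt₁ using quadCoeff_anti (hε.trans_le ht.1) htt₁
  · exact hlam.mono fun t ht => (le_abs_self _).trans (hK t ht)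

lemma tendsto_quadCoeff_nhdsLT (ht0 : 0 < t0) :
    Tendsto (quadCoeff t0) (𝓝[<] t0) (𝓝[>] 0) := by
  refine tendsto_nhdsWithin_iff.2 ⟨?_, ?_⟩
  · have hcont : ContinuousAt (quadCoeff t0) t0 :=
      (continuousAt_const.div continuousAt_id ht0.ne').sub continuousAt_const
    simpa [quadCoeff] using hcont.tendsto.mono_left nhdsWithin_le_nhds
  · filter_upwards [Ioo_mem_nhdsLT ht0] with t ht using quadCoeff_pos ht.1 ht.2

lemma lintegral_normKernel_eq_one_of_frequently [IsFiniteMeasure ν] {a t : ℝ} (ha : 0 < a)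
    (hν : ∀ᵐ θ ∂ν, a ≤ θ) (hba : AnalyticOnNhd ℝ b (Ioi 0)) (ht0 : 0 < t0)
    (hone : ∃ᶠ t in 𝓝[<] t0, ∫⁻ θ, ENNReal.ofReal (normKernel b t0 x0 θ t) ∂ν = 1)
    (ht : t ∈ Ioo 0 t0) : ∫⁻ θ, ENNReal.ofReal (normKernel b t0 x0 θ t) ∂ν = 1 := by
  let c : ℝ → ℝ := fun s => linCoeff b t0 x0 (s + 1 / t0)⁻¹
  have hc_quadCoeff (t : ℝ) : c (quadCoeff t0 t) = linCoeff b t0 x0 t := by simp [c, quadCoeff]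
  have hc : AnalyticOnNhd ℝ c (Ici 0) := fun s (hs : 0 ≤ s) => by
    have hpos : 0 < s + 1 / t0 := by positivity
    have htime : AnalyticAt ℝ (fun s : ℝ => (s + 1 / t0)⁻¹) s :=
      AnalyticAt.fun_inv (by fun_prop) hpos.ne'
    exact (((hba _ (inv_pos.2 hpos)).fun_comp_of_eq htime rfl).div htime (inv_pos.2 hpos).ne').sub
      analyticAt_const
  simp only [normKernel_eq_exp, lintegral_exp_eq_one_iff, ← hc_quadCoeff] at hone ⊢
  exact integral_exp_eq_one_of_frequently ha hν hc
    ((tendsto_quadCoeff_nhdsLT ht0).frequently hone) (quadCoeff_pos ht.1 ht.2)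

lemma exists_gap_of_lintegral_normKernel_eq_one [IsFiniteMeasure lam] (hε : 0 < ε) (hεt : ε < t0)
    (hb : ContinuousOn b (Icc ε t0)) (hx0 : x0 < b t0) (hlam : ∀ᵐ t ∂lam, t ∈ Icc ε t0)
    (hF : ∀ᵐ θ ∂ν, ∫⁻ t, ENNReal.ofReal (normKernel b t0 x0 θ t) ∂lam = 1) (a : ℝ) :
    ∃ η > 0, ∀ᵐ θ ∂ν, θ ∉ Ioo a (a + η) := by
  have hne := (eventually_lintegral_normKernel_ne_one hε hεt hb hx0 hlam a).filter_mono
    (nhdsWithin_mono a fun θ (hθ : a < θ) => hθ.ne')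
  obtain ⟨c, hac, hgap⟩ := mem_nhdsGT_iff_exists_Ioo_subset.1 hne
  refine ⟨c - a, sub_pos.2 hac, ?_⟩
  filter_upwards [hF] with θ hθ hmem
  exact hgap (by rwa [add_sub_cancel] at hmem) hθ

lemma ae_le_of_frequently_lintegral_normKernel_eq_one [IsFiniteMeasure lam]
    [IsFiniteMeasure ν] (hε : 0 < ε) (hεt : ε < t0)
    (hba : AnalyticOnNhd ℝ b (Ici 0)) (hb0 : 0 < b 0) (hx0 : x0 < b t0)
    (hlam : ∀ᵐ t ∂lam, t ∈ Icc ε t0) (hν : ∀ᵐ θ ∂ν, 2 * b 0 ≤ θ)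
    (hF : ∀ᵐ θ ∂ν, ∫⁻ t, ENNReal.ofReal (normKernel b t0 x0 θ t) ∂lam = 1)
    (hone : ∃ᶠ t in 𝓝[<] t0, ∫⁻ θ, ENNReal.ofReal (normKernel b t0 x0 θ t) ∂ν = 1) :
    ∀ᵐ θ ∂ν, θ ≤ 2 * b 0 := by
  have ht0 : 0 < t0 := hε.trans hεt
  have hb : ContinuousOn b (Icc ε t0) := hba.continuousOn.mono fun t ht => hε.le.trans ht.1
  obtain ⟨η, hη, hgap⟩ := exists_gap_of_lintegral_normKernel_eq_one hε hεt hb hx0 hlam hF (2 * b 0)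
  have hnull : invGMeasure t0 x0 ν (Ioi (2 * b 0)) = 0 := by
    refine measure_Ioi_eq_zero_of_rMu_eq_one (hba 0 self_mem_Ici) hb0 hη
      (ae_invGMeasure_iff.2 hν) (ae_invGMeasure_iff.2 hgap) ?_
    filter_upwards [Ioo_mem_nhdsGT ht0] with t ht
    rw [rMu_invGMeasure]
    exact lintegral_normKernel_eq_one_of_frequently (by positivity) hν
      (hba.mono Ioi_subset_Ici_self) ht0 hone ht
  exact (ae_invGMeasure_iff.1 (measure_eq_zero_iff_ae_notMem.1 hnull)).mono fun θ hθ => not_lt.1 hθ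

lemma exists_ae_le_of_lintegral_normKernel_eq_one [IsFiniteMeasure lam]
    [IsFiniteMeasure ν] (hε : 0 < ε) (hεt : ε < t0)
    (hba : AnalyticOnNhd ℝ b (Ici 0)) (hb0 : 0 < b 0) (hx0 : x0 < b t0)
    (hlam : ∀ᵐ t ∂lam, t ∈ Icc ε t0) (hlam0 : lam {t0} = 0) (hν : ∀ᵐ θ ∂ν, 2 * b 0 ≤ θ)
    (hR : ∀ᵐ t ∂lam, ∫⁻ θ, ENNReal.ofReal (normKernel b t0 x0 θ t) ∂ν = 1)
    (hF : ∀ᵐ θ ∂ν, ∫⁻ t, ENNReal.ofReal (normKernel b t0 x0 θ t) ∂lam = 1) :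
    ∃ N, ∀ᵐ θ ∂ν, θ ≤ N := by
  by_cases hone : ∃ᶠ t in 𝓝[<] t0, ∫⁻ θ, ENNReal.ofReal (normKernel b t0 x0 θ t) ∂ν = 1
  · exact ⟨2 * b 0,
      ae_le_of_frequently_lintegral_normKernel_eq_one hε hεt hba hb0 hx0 hlam hν hF hone⟩
  have hb : ContinuousOn b (Icc ε t0) := hba.continuousOn.mono fun t ht => hε.le.trans ht.1
  obtain ⟨t₁, ht₁, hne⟩ := (mem_nhdsLT_iff_exists_mem_Ico_Ioo_subset hεt).1 (not_frequently.1 hone)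
  have hle : ∀ᵐ t ∂lam, t ≤ t₁ := by
    filter_upwards [hlam, measure_eq_zero_iff_ae_notMem.1 hlam0, hR] with t ht htt0 htR
    exact not_lt.1 fun hlt => hne ⟨hlt, ht.2.lt_of_ne htt0⟩ htR
  obtain ⟨N, hN⟩ := eventually_atTop.1
    (eventually_lintegral_normKernel_ne_one_atTop (x0 := x0) hε hb hlam ht₁ hle)
  exact ⟨N, hF.mono fun θ hθ => not_lt.1 fun hlt => hN θ hlt.le hθ⟩

lemma one_le_lintegral_normKernel_self [IsFiniteMeasure ν] {N : ℝ} (hε : 0 < ε) (hεt : ε < t0)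
    (hb : ContinuousOn b (Icc ε t0)) (hν : ∀ᵐ θ ∂ν, |θ| ≤ N)
    (hR : ∀ t ∈ Ico ε t0, 1 ≤ ∫⁻ θ, ENNReal.ofReal (normKernel b t0 x0 θ t) ∂ν) :
    1 ≤ ∫⁻ θ, ENNReal.ofReal (normKernel b t0 x0 θ t0) ∂ν := by
  have hleft {f : ℝ → ℝ} (hf : ContinuousOn f (Icc ε t0)) : Tendsto f (𝓝[<] t0) (𝓝 (f t0)) :=
    ((hf t0 (right_mem_Icc.2 hεt.le)).mono Ico_subset_Icc_self).tendsto.mono_left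
      (nhdsWithin_Ico_eq_nhdsLT hεt).ge
  have hlim := tendsto_lintegral_exp hν (hleft (continuousOn_quadCoeff hε))
    (hleft (continuousOn_linCoeff (x0 := x0) hε hb))
  simp only [← normKernel_eq_exp] at hlim
  exact ge_of_tendsto hlim (mem_of_superset (Ico_mem_nhdsLT hεt) hR)

end BoundedSupport

/-! ### Strong duality -/

section StrongDuality

variable {b : ℝ → ℝ} {t0 x0 ε : ℝ} {lam μ : Measure ℝ}

lemma aemeasurable_uncurry_rTheta [SFinite μ] (hb : ContinuousOn b (Icc ε t0))
    (hlam : ∀ᵐ t ∂lam, t ∈ Icc ε t0) :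
    AEMeasurable (Function.uncurry fun t θ => rTheta θ t (b t)) (lam.prod μ) := by
  have hbm : AEMeasurable (fun p : ℝ × ℝ => b p.1) (lam.prod μ) :=
    (aestronglyMeasurable_of_continuousOn_Icc hb hlam).aemeasurable.comp_fst
  exact Real.measurable_exp.comp_aemeasurable
    (AEMeasurable.add (by fun_prop) ((measurable_snd.aemeasurable.mul hbm).div (by fun_prop)))

lemma tendsto_val_cocompact_Ici (a : ℝ) :
    Tendsto (Subtype.val : Ici a → ℝ) (cocompact _) atTop := by
  refine tendsto_atTop_mono (f := fun θ : Ici a => -(2 * |a|) + ‖(θ : ℝ)‖) (fun θ => ?_)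
    (tendsto_atTop_add_const_left _ _ ((tendsto_norm_cocompact_atTop (E := ℝ)).comp
      isClosed_Ici.isClosedEmbedding_subtypeVal.tendsto_cocompact))
  have hθ : a ≤ θ := θ.2
  rw [Real.norm_eq_abs]
  rcases abs_cases a with h | h <;> rcases abs_cases (θ : ℝ) with h' | h' <;> linarith

lemma exists_measures_normKernel {a : ℝ} (hε : 0 < ε) (hεt : ε < t0)
    (hb : ContinuousOn b (Icc ε t0)) :
    ∃ ν lam : Measure ℝ, IsFiniteMeasure ν ∧ IsFiniteMeasure lam ∧ (∀ᵐ θ ∂ν, a ≤ θ) ∧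
      (∀ᵐ t ∂lam, t ∈ Icc ε t0) ∧ ν univ ≤ lam univ ∧
      (∀ θ ≥ a, ∫⁻ t, ENNReal.ofReal (normKernel b t0 x0 θ t) ∂lam ≤ 1) ∧
      ∀ t ∈ Ico ε t0, 1 ≤ ∫⁻ θ, ENNReal.ofReal (normKernel b t0 x0 θ t) ∂ν := by
  have hΘ : LocallyCompactSpace (Ici a) := isClosed_Ici.locallyCompactSpace
  obtain ⟨ν, π, hπfin, hνπ, hF, hR⟩ := exists_dual_measures_of_tendsto_cocompact
    (Θ := Ici a) (T := Icc ε t0) (k := fun θ t => normKernel b t0 x0 θ t) (T' := {t | t < t0})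
    (fun θ t => normKernel_pos b t0 x0 θ t) ⟨⟨ε, left_mem_Icc.2 hεt.le⟩, hεt⟩
    (fun θ => (continuousOn_normKernel hε hb θ).domRestrict)
    (fun t _ => (continuous_normKernel b t0 x0 t).comp continuous_subtype_val)
    (fun t ht =>
      (tendsto_normKernel_atTop (hε.trans_le t.2.1) ht).comp (tendsto_val_cocompact_Ici a))
  have hι := MeasurableEmbedding.subtype_coe (measurableSet_Ici (a := a))
  have hκ := MeasurableEmbedding.subtype_coe (measurableSet_Icc (a := ε) (b := t0))
  have hνfin : IsFiniteMeasure ν := ⟨hνπ.trans_lt (measure_lt_top π univ)⟩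
  refine ⟨ν.map Subtype.val, π.map Subtype.val, inferInstance, inferInstance, ?_, ?_, ?_, ?_, ?_⟩
  · exact hι.ae_map_iff.2 (.of_forall fun θ => θ.2)
  · exact hκ.ae_map_iff.2 (.of_forall fun t => t.2)
  · simpa [hι.map_apply, hκ.map_apply] using hνπ
  · intro θ hθ
    simpa only [hκ.lintegral_map] using hF ⟨θ, hθ⟩
  · intro t ht
    simpa only [hι.lintegral_map] using hR ⟨t, Ico_subset_Icc_self ht⟩ ht.2

lemma measure_Icc_le_lintegral_of_admissible (hb : ContinuousOn b (Icc ε t0))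
    (hμ : P2epsAdm b t0 ε μ) (hlam : D2epsAdm b t0 x0 ε lam) :
    lam (Icc ε t0) ≤ ∫⁻ θ, ENNReal.ofReal (rTheta θ t0 x0) ∂μ := by
  obtain ⟨_, hμsupp, hμone⟩ := hμ
  obtain ⟨_, hlamsupp, hlamle⟩ := hlam
  have hlamIcc : ∀ᵐ t ∂lam, t ∈ Icc ε t0 := hlamsupp
  have hμIci : ∀ᵐ θ ∂μ, θ ∈ Ici (2 * b 0) := hμsupp
  rw [measure_of_measure_compl_eq_zero hlamsupp]
  exact measure_univ_le_lintegral_of_feasible (K := fun t θ => ENNReal.ofReal (rTheta θ t (b t)))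
    (aemeasurable_uncurry_rTheta hb hlamIcc).ennreal_ofReal (hlamIcc.mono hμone)
    (hμIci.mono hlamle)

theorem exists_admissible_pair (hba : AnalyticOnNhd ℝ b (Ici 0)) (hb0 : 0 < b 0)
    (hx0 : x0 < b t0) (hε : 0 < ε) (hεt : ε < t0) :
    ∃ μ lam : Measure ℝ, P2epsAdm b t0 ε μ ∧ D2epsAdm b t0 x0 ε lam ∧
      ∫⁻ θ, ENNReal.ofReal (rTheta θ t0 x0) ∂μ ≤ lam (Icc ε t0) := by
  have hb : ContinuousOn b (Icc ε t0) := hba.continuousOn.mono fun t ht => hε.le.trans ht.1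
  obtain ⟨ν, lam, hνfin, hlamfin, hν, hlam, hνlam, hF, hR⟩ :=
    exists_measures_normKernel (x0 := x0) (a := 2 * b 0) hε hεt hb
  have hlam0 : lam {t0} = 0 :=
    measure_singleton_eq_zero_of_lintegral_normKernel_le (hε.trans hεt) hx0 hF
  have hRae : ∀ᵐ t ∂lam, 1 ≤ ∫⁻ θ, ENNReal.ofReal (normKernel b t0 x0 θ t) ∂ν := by
    filter_upwards [hlam, measure_eq_zero_iff_ae_notMem.1 hlam0] with t ht htt0
      using hR t ⟨ht.1, ht.2.lt_of_ne htt0⟩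
  have hmeas : AEMeasurable (Function.uncurry fun t θ => normKernel b t0 x0 θ t) (lam.prod ν) :=
    (aemeasurable_uncurry_rTheta hb hlam).div
      ((continuous_rTheta t0 x0).measurable.comp measurable_snd).aemeasurable
  obtain ⟨hRone, hFone⟩ := complementary_slackness (g := fun _ => 1) hmeas.ennreal_ofReal
    aemeasurable_const hRae (hν.mono hF) (by rwa [lintegral_one])
  obtain ⟨N, hN⟩ :=
    exists_ae_le_of_lintegral_normKernel_eq_one hε hεt hba hb0 hx0 hlam hlam0 hν hRone hFone
  have hνN : ∀ᵐ θ ∂ν, |θ| ≤ N := by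
    filter_upwards [hν, hN] with θ hθ hθN
    rwa [abs_of_nonneg (by linarith)]
  refine ⟨invGMeasure t0 x0 ν, lam, ⟨isFiniteMeasure_invGMeasure hνN, ae_invGMeasure_iff.2 hν,
    fun t ht => ?_⟩, ⟨hlamfin, hlam, fun θ hθ => ?_⟩, ?_⟩
  · rw [rMu_invGMeasure]
    rcases ht.2.lt_or_eq with htt0 | rfl
    · exact hR t ⟨ht.1, htt0⟩
    · exact one_le_lintegral_normKernel_self hε hεt hb hνN hR
  · rw [← ofReal_mul_lintegral_normKernel]
    exact mul_le_of_le_one_right' (hF θ hθ)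
  · rwa [lintegral_rTheta_invGMeasure, measure_of_measure_compl_eq_zero (s := Icc ε t0) hlam]

end StrongDuality

theorem stmt_9_general (b : ℝ → ℝ) (hba : AnalyticOnNhd ℝ b (Set.Ici 0)) (hb0 : 0 < b 0)
    (t0 x0 : ℝ) (hx0 : x0 < b t0) :
    ∀ ε ∈ Set.Ioo 0 t0,
      ∃ (μ2 lam2 : Measure ℝ), P2epsAdm b t0 ε μ2 ∧ D2epsAdm b t0 x0 ε lam2 ∧
        (∫⁻ θ, ENNReal.ofReal (rTheta θ t0 x0) ∂μ2)
          = (⨅ μ ∈ {μ : Measure ℝ | P2epsAdm b t0 ε μ},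
              ∫⁻ θ, ENNReal.ofReal (rTheta θ t0 x0) ∂μ) ∧
        (⨅ μ ∈ {μ : Measure ℝ | P2epsAdm b t0 ε μ},
            ∫⁻ θ, ENNReal.ofReal (rTheta θ t0 x0) ∂μ)
          = (⨆ lam ∈ {lam : Measure ℝ | D2epsAdm b t0 x0 ε lam}, lam (Set.Icc ε t0)) ∧
        (⨆ lam ∈ {lam : Measure ℝ | D2epsAdm b t0 x0 ε lam}, lam (Set.Icc ε t0))
          = lam2 (Set.Icc ε t0) ∧
        (∀ᵐ t ∂lam2, rMu μ2 t (b t) = 1) ∧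
        (∀ᵐ θ ∂μ2, (∫⁻ t, ENNReal.ofReal (rTheta θ t (b t)) ∂lam2)
          = ENNReal.ofReal (rTheta θ t0 x0)) := by
  rintro ε ⟨hε, hεt⟩
  have hb : ContinuousOn b (Icc ε t0) := hba.continuousOn.mono fun t ht => hε.le.trans ht.1
  obtain ⟨μ, lam, hμ, hlam, hle⟩ := exists_admissible_pair hba hb0 hx0 hε hεt
  obtain ⟨hmin, hduality, hmax⟩ := eq_biInf_and_biInf_eq_biSup_and_biSup_eq
    (P := {μ | P2epsAdm b t0 ε μ}) (D := {lam | D2epsAdm b t0 x0 ε lam})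
    (fun _ hμ' _ hlam' => measure_Icc_le_lintegral_of_admissible hb hμ' hlam') hμ hlam hle
  refine ⟨μ, lam, hμ, hlam, hmin, hduality, hmax, ?_⟩
  obtain ⟨_, hμsupp, hμone⟩ := hμ
  obtain ⟨_, hlamsupp, hlamle⟩ := hlam
  have hlamIcc : ∀ᵐ t ∂lam, t ∈ Icc ε t0 := hlamsupp
  have hμIci : ∀ᵐ θ ∂μ, θ ∈ Ici (2 * b 0) := hμsupp
  rw [measure_of_measure_compl_eq_zero hlamsupp] at hle
  exact complementary_slackness (aemeasurable_uncurry_rTheta hb hlamIcc).ennreal_ofReal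
    (measurable_ofReal_rTheta t0 x0).aemeasurable (hlamIcc.mono hμone) (hμIci.mono hlamle) hle

theorem stmt_9 (b : ℝ → ℝ)
    (hba : AnalyticOnNhd ℝ b (Set.Ici 0)) (hbconc : ConcaveOn ℝ (Set.Ici 0) b)
    (hb0 : 0 < b 0) (hbderiv : ∃ d : ℝ, HasDerivWithinAt b d (Set.Ici 0) 0)
    (t0 x0 : ℝ) (ht0 : 0 < t0) (hx0 : x0 < b t0) :
    ∀ ε ∈ Set.Ioo 0 t0,
      ∃ (μ2 lam2 : Measure ℝ), P2epsAdm b t0 ε μ2 ∧ D2epsAdm b t0 x0 ε lam2 ∧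
        (∫⁻ θ, ENNReal.ofReal (rTheta θ t0 x0) ∂μ2)
          = (⨅ μ ∈ {μ : Measure ℝ | P2epsAdm b t0 ε μ},
              ∫⁻ θ, ENNReal.ofReal (rTheta θ t0 x0) ∂μ) ∧
        (⨅ μ ∈ {μ : Measure ℝ | P2epsAdm b t0 ε μ},
            ∫⁻ θ, ENNReal.ofReal (rTheta θ t0 x0) ∂μ)
          = (⨆ lam ∈ {lam : Measure ℝ | D2epsAdm b t0 x0 ε lam}, lam (Set.Icc ε t0)) ∧
        (⨆ lam ∈ {lam : Measure ℝ | D2epsAdm b t0 x0 ε lam}, lam (Set.Icc ε t0))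
          = lam2 (Set.Icc ε t0) ∧
        (∀ᵐ t ∂lam2, rMu μ2 t (b t) = 1) ∧
        (∀ᵐ θ ∂μ2, (∫⁻ t, ENNReal.ofReal (rTheta θ t (b t)) ∂lam2)
          = ENNReal.ofReal (rTheta θ t0 x0)) :=
  stmt_9_general b hba hb0 t0 x0 hx0
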